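/- arXiv:1707.06688 — 2 statements merged into one kernel-verified Lean document; each statement's English description precedes it below -/
import Mathlib

section
/- Let Λ ⊂ ℝ^n be a full-rank lattice with n ≥ 16, let σ_s, σ_w > 0 and ε ∈ (0,1). Set α = σ_s²/(σ_s²+σ_w²), σ_eff² = σ_s²σ_w²/(σ_s²+σ_w²), s_ε = err⁻¹_ε(Λ)·σ_eff, and γ(Λ,ε) = err⁻¹_ε(Λ)²·V(Λ)^{2/n}/(2πe). Then the set of shifts t ∈ ℝ^n with the following three properties has measure at least 1/2 under the Gaussian measure N(0, σ_s² I_n): letting X ~ D_{s_ε Λ + t, σ_s} and W ~ N(0, σ_w² I_n) be independent, (1) Pr[(1−α)X + αW ∉ s_ε·V(Λ)] ≤ 6ε; (2) E[‖X‖²] ≤ (1 + 4/√n)·n·σ_s²; (3) (1/n)·H(X) ≥ (1/2)·log(1 + σ_s²/σ_w²) − ((1/2)·log γ(Λ,ε) + 2/√n + 4/n). -/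
open MeasureTheory Real Filter Pointwise
open scoped ENNReal RealInnerProductSpace

noncomputable section

/-- The (continuous) Gaussian density with parameter `σ` on `ℝⁿ`:
`f_σ(x) = (2πσ²)^{-n/2} exp(-‖x‖²/(2σ²))`. -/
def gaussF (n : ℕ) (σ : ℝ) (x : EuclideanSpace ℝ (Fin n)) : ℝ :=
  (2 * π * σ ^ 2) ^ (-(n : ℝ) / 2) * Real.exp (-‖x‖ ^ 2 / (2 * σ ^ 2))

/-- The Gaussian mass `f_σ(S) = Σ_{y ∈ S} f_σ(y)` of a (countable) set `S ⊆ ℝⁿ`. -/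
def gaussMass (n : ℕ) (σ : ℝ) (S : Set (EuclideanSpace ℝ (Fin n))) : ℝ :=
  ∑' y : S, gaussF n σ y

/-- The Gaussian measure `N(0, σ² Iₙ)` on `ℝⁿ`, given by its density w.r.t. Lebesgue measure. -/
def gaussMeasure (n : ℕ) (σ : ℝ) : Measure (EuclideanSpace ℝ (Fin n)) :=
  volume.withDensity fun x => ENNReal.ofReal (gaussF n σ x)

/-- The coset `S + t` of a set `S ⊆ ℝⁿ`, i.e. `{x | x - t ∈ S}`. -/
def coset (n : ℕ) (S : Set (EuclideanSpace ℝ (Fin n))) (t : EuclideanSpace ℝ (Fin n)) :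
    Set (EuclideanSpace ℝ (Fin n)) := {x | x - t ∈ S}

/-- The Voronoi cell of `S`: `{x | ⟪x,y⟫ ≤ ‖y‖²/2 for all y ∈ S}`. -/
def voronoi (n : ℕ) (S : Set (EuclideanSpace ℝ (Fin n))) : Set (EuclideanSpace ℝ (Fin n)) :=
  {x | ∀ y ∈ S, ⟪x, y⟫ ≤ ‖y‖ ^ 2 / 2}

/-- The inverse error function `err⁻¹_ε(Λ)`: the least `s > 0` such that a standard Gaussian
leaves `s · V(Λ)` with probability at most `ε`. -/
def errInv (n : ℕ) (ε : ℝ) (S : Set (EuclideanSpace ℝ (Fin n))) : ℝ :=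
  sInf {s : ℝ | 0 < s ∧ gaussMeasure n 1 ((s • voronoi n S)ᶜ) ≤ ENNReal.ofReal ε}

/-- The Shannon entropy (in nats) of the discrete Gaussian `D_{S,σ}` supported on `S`,
which assigns mass `f_σ(y)/f_σ(S)` to each `y ∈ S`. -/
def dgEntropy (n : ℕ) (σ : ℝ) (S : Set (EuclideanSpace ℝ (Fin n))) : ℝ :=
  -∑' y : S, (gaussF n σ y / gaussMass n σ S) * Real.log (gaussF n σ y / gaussMass n σ S)

/-- The flatness factor `ε_Λ(σ) = sup_{x ∈ V(Λ)} |V(Λ)·f_σ(Λ+x) − 1|`. -/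
def flatness (n : ℕ) (L : Submodule ℤ (EuclideanSpace ℝ (Fin n))) (σ : ℝ) : ℝ :=
  ⨆ x : voronoi n (L : Set (EuclideanSpace ℝ (Fin n))),
    |ZLattice.covolume L volume *
        gaussMass n σ (coset n (L : Set (EuclideanSpace ℝ (Fin n))) x) - 1|

lemma gaussF_eq (n : ℕ) (σ : ℝ) (x : EuclideanSpace ℝ (Fin n)) :
    gaussF n σ x = (2 * π * σ ^ 2) ^ (-(n : ℝ) / 2) * Real.exp (-(1 / (2 * σ ^ 2)) * ‖x‖ ^ 2) := by
  unfold gaussF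
  congr 2
  ring

lemma gaussF_pos (n : ℕ) {σ : ℝ} (hσ : 0 < σ) (x : EuclideanSpace ℝ (Fin n)) :
    0 < gaussF n σ x := by
  unfold gaussF
  have := Real.pi_pos
  positivity

lemma gaussF_continuous (n : ℕ) (σ : ℝ) : Continuous (gaussF n σ) := by
  unfold gaussF
  fun_prop

lemma gaussF_const_mul (n : ℕ) {σ : ℝ} (hσ : 0 < σ) :
    (2 * π * σ ^ 2) ^ (-(n : ℝ) / 2) * (π / (1 / (2 * σ ^ 2))) ^ ((n : ℝ) / 2) = 1 := by
  have h : π / (1 / (2 * σ ^ 2)) = 2 * π * σ ^ 2 := by field_simp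
  have hp : 0 < 2 * π * σ ^ 2 := by have := Real.pi_pos; positivity
  rw [h, ← Real.rpow_add hp, neg_div, neg_add_cancel, Real.rpow_zero]

lemma integral_gaussF (n : ℕ) {σ : ℝ} (hσ : 0 < σ) : ∫ x, gaussF n σ x = 1 := by
  simp_rw [gaussF_eq]
  rw [integral_const_mul, GaussianFourier.integral_rexp_neg_mul_sq_norm (by positivity)]
  simpa using gaussF_const_mul n hσ

lemma integrable_gaussF (n : ℕ) {σ : ℝ} (hσ : 0 < σ) : Integrable (gaussF n σ) := by
  by_contra h
  have := integral_undef h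
  rw [integral_gaussF n hσ] at this
  exact one_ne_zero this

lemma lintegral_gaussF (n : ℕ) {σ : ℝ} (hσ : 0 < σ) :
    ∫⁻ x, ENNReal.ofReal (gaussF n σ x) = 1 := by
  rw [← ofReal_integral_eq_lintegral_ofReal (integrable_gaussF n hσ)
    (Filter.Eventually.of_forall fun x => (gaussF_pos n hσ x).le), integral_gaussF n hσ]
  simp

lemma isProb_gaussMeasure (n : ℕ) {σ : ℝ} (hσ : 0 < σ) :
    IsProbabilityMeasure (gaussMeasure n σ) := by
  constructor
  rw [gaussMeasure, withDensity_apply _ MeasurableSet.univ, Measure.restrict_univ,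
    lintegral_gaussF n hσ]

lemma measurable_ofReal_gaussF (n : ℕ) (σ : ℝ) :
    Measurable fun x => ENNReal.ofReal (gaussF n σ x) :=
  (gaussF_continuous n σ).measurable.ennreal_ofReal

lemma charFun_gaussMeasure (n : ℕ) {σ : ℝ} (hσ : 0 < σ) (ξ : EuclideanSpace ℝ (Fin n)) :
    charFun (gaussMeasure n σ) ξ = Complex.exp (-(σ ^ 2 * ‖ξ‖ ^ 2 / 2 : ℝ)) := by
  rw [charFun_apply, gaussMeasure, integral_withDensity_eq_integral_toReal_smul
    (measurable_ofReal_gaussF n σ) (by simp)]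
  have hb : 0 < ((1 / (2 * σ ^ 2) : ℝ) : ℂ).re := by
    rw [Complex.ofReal_re]; positivity
  have key := GaussianFourier.integral_cexp_neg_mul_sq_norm_add hb Complex.I ξ
  have h1 : ∀ x : EuclideanSpace ℝ (Fin n),
      (ENNReal.ofReal (gaussF n σ x)).toReal • Complex.exp ((inner ℝ x ξ : ℝ) * Complex.I) =
      (((2 * π * σ ^ 2) ^ (-(n : ℝ) / 2) : ℝ) : ℂ) *
        Complex.exp (-((1 / (2 * σ ^ 2) : ℝ) : ℂ) * ‖x‖ ^ 2 + Complex.I * (inner ℝ ξ x : ℝ)) := by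
    intro x
    rw [ENNReal.toReal_ofReal (gaussF_pos n hσ x).le, gaussF_eq, Complex.exp_add,
      real_inner_comm, Complex.real_smul]
    push_cast
    ring_nf
  simp_rw [h1]
  rw [integral_const_mul, key, ← mul_assoc]
  have h2 : (((2 * π * σ ^ 2) ^ (-(n : ℝ) / 2) : ℝ) : ℂ) *
      ((π : ℂ) / ((1 / (2 * σ ^ 2) : ℝ) : ℂ)) ^ ((Module.finrank ℝ (EuclideanSpace ℝ (Fin n)) : ℂ) / 2) = 1 := by
    have := gaussF_const_mul n hσ
    have hpos : (0:ℝ) ≤ π / (1 / (2 * σ ^ 2)) := by have := Real.pi_pos; positivity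
    rw [finrank_euclideanSpace_fin, ← Complex.ofReal_div]
    have e : ((n : ℂ) / 2) = (((n : ℝ) / 2 : ℝ) : ℂ) := by push_cast; rfl
    rw [e, ← Complex.ofReal_cpow hpos, ← Complex.ofReal_mul, this, Complex.ofReal_one]
  rw [h2, one_mul]
  congr 1
  push_cast
  rw [Complex.I_sq]
  have : (σ : ℂ) ≠ 0 := by exact_mod_cast hσ.ne'
  field_simp
  norm_num

lemma gaussMeasure_map_comb (n : ℕ) {σ τ ρ a b : ℝ} (hσ : 0 < σ) (hτ : 0 < τ) (hρ : 0 < ρ)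
    (h : a ^ 2 * σ ^ 2 + b ^ 2 * τ ^ 2 = ρ ^ 2) :
    ((gaussMeasure n σ).prod (gaussMeasure n τ)).map (fun p => a • p.1 + b • p.2) =
      gaussMeasure n ρ := by
  have := isProb_gaussMeasure n hσ
  have := isProb_gaussMeasure n hτ
  have := isProb_gaussMeasure n hρ
  have e : ((gaussMeasure n σ).prod (gaussMeasure n τ)).map (fun p => a • p.1 + b • p.2) =
      ((gaussMeasure n σ).map (fun x => a • x)) ∗ ((gaussMeasure n τ).map (fun x => b • x)) := by
    rw [Measure.conv, Measure.map_prod_map _ _ (by fun_prop) (by fun_prop),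
      Measure.map_map (by fun_prop) (by fun_prop)]
    rfl
  rw [e]
  have := Measure.isProbabilityMeasure_map (μ := gaussMeasure n σ)
    (f := fun x => a • x) (by fun_prop)
  have := Measure.isProbabilityMeasure_map (μ := gaussMeasure n τ)
    (f := fun x => b • x) (by fun_prop)
  apply Measure.ext_of_charFun
  ext ξ
  rw [charFun_conv, charFun_map_smul, charFun_map_smul, charFun_gaussMeasure n hσ,
    charFun_gaussMeasure n hτ, charFun_gaussMeasure n hρ, ← Complex.exp_add]
  congr 1
  rw [norm_smul, norm_smul, ← h, mul_pow, mul_pow, Real.norm_eq_abs, Real.norm_eq_abs,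
    sq_abs, sq_abs]
  push_cast
  ring

lemma gaussMeasure_map_smul (n : ℕ) {σ ρ : ℝ} (hσ : 0 < σ) (hρ : 0 < ρ) :
    (gaussMeasure n σ).map (fun x => ρ • x) = gaussMeasure n (ρ * σ) := by
  have := isProb_gaussMeasure n hσ
  have := isProb_gaussMeasure n (mul_pos hρ hσ)
  have := Measure.isProbabilityMeasure_map (μ := gaussMeasure n σ)
    (f := fun x => ρ • x) (by fun_prop)
  apply Measure.ext_of_charFun
  ext ξ
  rw [charFun_map_smul, charFun_gaussMeasure n hσ, charFun_gaussMeasure n (mul_pos hρ hσ),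
    norm_smul, mul_pow, mul_pow, Real.norm_eq_abs, sq_abs]
  congr 2
  push_cast
  ring

/-- radial moments -/
lemma integral_norm_pow_mul_exp (n : ℕ) (hn : 0 < n) {b : ℝ} (hb : 0 < b) (k : ℕ) :
    Integrable (fun x : EuclideanSpace ℝ (Fin n) => ‖x‖ ^ k * Real.exp (-b * ‖x‖ ^ 2)) ∧
    ∫ x : EuclideanSpace ℝ (Fin n), ‖x‖ ^ k * Real.exp (-b * ‖x‖ ^ 2) =
      n * ((volume : Measure (EuclideanSpace ℝ (Fin n))).real (Metric.ball 0 1) *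
      (b ^ (-((n : ℝ) + k) / 2) * (1 / 2) * Real.Gamma (((n : ℝ) + k) / 2))) := by
  have : NeZero n := ⟨hn.ne'⟩
  have : Nontrivial (EuclideanSpace ℝ (Fin n)) := by
    apply Module.nontrivial_of_finrank_pos (R := ℝ)
    simpa using hn
  have h0 : ((n - 1 : ℕ) : ℝ) = n - 1 := by
    rw [Nat.cast_sub hn]; simp
  have hq : -1 < ((n - 1 : ℕ) : ℝ) + k := by
    rw [h0]
    have : (0:ℝ) < n := by exact_mod_cast hn
    have : (0:ℝ) ≤ k := by positivity
    linarith
  have e : Set.EqOn (fun y : ℝ => y ^ (n - 1) • (y ^ k * Real.exp (-b * y ^ 2)))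
      (fun y : ℝ => y ^ (((n - 1 : ℕ) : ℝ) + k) * Real.exp (-b * y ^ (2:ℝ))) (Set.Ioi 0) := by
    intro y hy
    simp only [smul_eq_mul]
    rw [Real.rpow_add hy, Real.rpow_natCast, Real.rpow_natCast, Real.rpow_two]
    ring
  constructor
  · rw [integrable_fun_norm_addHaar volume (f := fun y => y ^ k * Real.exp (-b * y ^ 2)),
      finrank_euclideanSpace_fin]
    rw [integrableOn_congr_fun e measurableSet_Ioi]
    simpa using integrableOn_rpow_mul_exp_neg_mul_sq hb hq
  · rw [integral_fun_norm_addHaar volume (fun y => y ^ k * Real.exp (-b * y ^ 2)),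
      finrank_euclideanSpace_fin, setIntegral_congr_fun measurableSet_Ioi e,
      integral_rpow_mul_exp_neg_mul_rpow (by norm_num) hq hb, h0]
    simp only [nsmul_eq_mul, smul_eq_mul]
    congr 4 <;> ring_nf

lemma integrable_norm_pow_gaussF (n : ℕ) (hn : 0 < n) {σ : ℝ} (hσ : 0 < σ) (k : ℕ) :
    Integrable (fun x => ‖x‖ ^ k * gaussF n σ x) := by
  have := (integral_norm_pow_mul_exp n hn (b := 1 / (2 * σ ^ 2)) (by positivity) k).1.const_mul
    ((2 * π * σ ^ 2) ^ (-(n : ℝ) / 2))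
  refine this.congr (Filter.Eventually.of_forall fun x => ?_)
  simp only [gaussF_eq]
  ring

lemma integral_norm_pow_gaussF (n : ℕ) (hn : 0 < n) {σ : ℝ} (hσ : 0 < σ) (k : ℕ) :
    ∫ x, ‖x‖ ^ (k + 2) * gaussF n σ x = (n + k) * σ ^ 2 * ∫ x, ‖x‖ ^ k * gaussF n σ x := by
  have hb : 0 < 1 / (2 * σ ^ 2) := by positivity
  have e : ∀ k : ℕ, ∫ x, ‖x‖ ^ k * gaussF n σ x = (2 * π * σ ^ 2) ^ (-(n : ℝ) / 2) *
      ∫ x : EuclideanSpace ℝ (Fin n), ‖x‖ ^ k * Real.exp (-(1 / (2 * σ ^ 2)) * ‖x‖ ^ 2) := by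
    intro k
    rw [← integral_const_mul]
    congr 1
    ext x
    rw [gaussF_eq]
    ring
  rw [e, e, (integral_norm_pow_mul_exp n hn hb k).2, (integral_norm_pow_mul_exp n hn hb (k+2)).2]
  have hpos : ((n : ℝ) + k) / 2 ≠ 0 := by positivity
  have g : Real.Gamma (((n : ℝ) + (k + 2 : ℕ)) / 2) =
      ((n : ℝ) + k) / 2 * Real.Gamma (((n : ℝ) + k) / 2) := by
    rw [← Real.Gamma_add_one hpos]
    congr 1
    push_cast
    ring
  have r : (1 / (2 * σ ^ 2)) ^ (-((n : ℝ) + (k + 2 : ℕ)) / 2) =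
      (1 / (2 * σ ^ 2)) ^ (-((n : ℝ) + k) / 2) * (2 * σ ^ 2) := by
    have : -((n : ℝ) + (k + 2 : ℕ)) / 2 = -((n : ℝ) + k) / 2 + -1 := by push_cast; ring
    rw [this, Real.rpow_add hb, Real.rpow_neg_one]
    simp
  rw [g, r]
  ring

lemma integral_variance_gaussF (n : ℕ) (hn : 0 < n) {σ : ℝ} (hσ : 0 < σ) :
    Integrable (fun x => (‖x‖ ^ 2 - n * σ ^ 2) ^ 2 * gaussF n σ x) ∧
    ∫ x, (‖x‖ ^ 2 - n * σ ^ 2) ^ 2 * gaussF n σ x = 2 * n * σ ^ 4 := by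
  have i0 := integrable_norm_pow_gaussF n hn hσ 0
  have i2 := integrable_norm_pow_gaussF n hn hσ 2
  have i4 := integrable_norm_pow_gaussF n hn hσ 4
  have m0 : ∫ x, ‖x‖ ^ 0 * gaussF n σ x = 1 := by simpa using integral_gaussF n hσ
  have m2 := integral_norm_pow_gaussF n hn hσ 0
  have m4 := integral_norm_pow_gaussF n hn hσ 2
  have e : (fun x => (‖x‖ ^ 2 - n * σ ^ 2) ^ 2 * gaussF n σ x) = fun x =>
      ‖x‖ ^ 4 * gaussF n σ x - (2 * n * σ ^ 2) * (‖x‖ ^ 2 * gaussF n σ x) +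
        (n * σ ^ 2) ^ 2 * (‖x‖ ^ 0 * gaussF n σ x) := by
    ext x; ring
  rw [e]
  have i42 : Integrable (fun x => ‖x‖ ^ 4 * gaussF n σ x -
      (2 * n * σ ^ 2) * (‖x‖ ^ 2 * gaussF n σ x)) := i4.sub (i2.const_mul _)
  refine ⟨i42.add (i0.const_mul _), ?_⟩
  rw [integral_add i42 (i0.const_mul _),
    integral_sub i4 (i2.const_mul _), integral_const_mul, integral_const_mul]
  norm_num at m2 m4
  simp only [pow_zero, one_mul] at m0
  simp only [pow_zero, one_mul]
  rw [m4, m2, m0]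
  ring

/-- the scaled Voronoi cell, described by inequalities -/
def scaledV (n : ℕ) (S : Set (EuclideanSpace ℝ (Fin n))) (s : ℝ) : Set (EuclideanSpace ℝ (Fin n)) :=
  {x | ∀ y ∈ S, ⟪x, y⟫ ≤ s * (‖y‖ ^ 2 / 2)}

lemma smul_voronoi_eq (n : ℕ) (S : Set (EuclideanSpace ℝ (Fin n))) {s : ℝ} (hs : 0 < s) :
    s • voronoi n S = scaledV n S s := by
  ext x
  rw [Set.mem_smul_set_iff_inv_smul_mem₀ hs.ne']
  simp only [voronoi, scaledV, Set.mem_ofPred_eq, real_inner_smul_left]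
  refine forall₂_congr fun y _ => ?_
  rw [inv_mul_le_iff₀ hs]

lemma isClosed_scaledV (n : ℕ) (S : Set (EuclideanSpace ℝ (Fin n))) (s : ℝ) :
    IsClosed (scaledV n S s) := by
  have : scaledV n S s = ⋂ y ∈ S, {x | ⟪x, y⟫ ≤ s * (‖y‖ ^ 2 / 2)} := by
    ext x; simp [scaledV]
  rw [this]
  refine isClosed_biInter fun y _ => ?_
  exact isClosed_le (by fun_prop) continuous_const

lemma scaledV_mono (n : ℕ) (S : Set (EuclideanSpace ℝ (Fin n))) {s t : ℝ} (h : s ≤ t) :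
    scaledV n S s ⊆ scaledV n S t := fun x hx y hy =>
  (hx y hy).trans (mul_le_mul_of_nonneg_right h (by positivity))

lemma exists_lattice_sep (n : ℕ) (L : Submodule ℤ (EuclideanSpace ℝ (Fin n))) [DiscreteTopology L] :
    ∃ r : ℝ, 0 < r ∧ ∀ y ∈ L, y ≠ 0 → r ≤ ‖y‖ := by
  have h : IsOpen ({0} : Set L) := isOpen_discrete _
  obtain ⟨r, hr, hb⟩ := Metric.isOpen_iff.1 h 0 rfl
  refine ⟨r, hr, fun y hy hy0 => ?_⟩
  by_contra! hlt
  have : (⟨y, hy⟩ : L) ∈ Metric.ball (0 : L) r := by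
    rw [mem_ball_zero_iff]; exact hlt
  have := hb this
  apply hy0
  simpa using this

lemma exists_mem_scaledV (n : ℕ) (L : Submodule ℤ (EuclideanSpace ℝ (Fin n))) [DiscreteTopology L]
    (x : EuclideanSpace ℝ (Fin n)) :
    ∃ k : ℕ, x ∈ scaledV n (L : Set (EuclideanSpace ℝ (Fin n))) ((k : ℝ) + 1) := by
  obtain ⟨r, hr, h⟩ := exists_lattice_sep n L
  obtain ⟨k, hk⟩ := exists_nat_gt (2 * ‖x‖ / r)
  refine ⟨k, fun y hy => ?_⟩
  by_cases hy0 : y = 0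
  · simp [hy0]
  have h1 := real_inner_le_norm x y
  have h2 := h y hy hy0
  rw [div_lt_iff₀ hr] at hk
  have h3 : 2 * ‖x‖ ≤ (k + 1) * ‖y‖ := by nlinarith [(Nat.cast_nonneg k : (0:ℝ) ≤ k)]
  nlinarith [norm_nonneg y]

lemma scaledV_zero (n : ℕ) (L : Submodule ℤ (EuclideanSpace ℝ (Fin n))) [DiscreteTopology L]
    [IsZLattice ℝ L] : scaledV n (L : Set (EuclideanSpace ℝ (Fin n))) 0 ⊆ {0} := by
  intro x hx
  have h1 : ∀ y ∈ L, ⟪x, y⟫ = 0 := by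
    intro y hy
    have a := hx y hy
    have b := hx (-y) (L.neg_mem hy)
    rw [inner_neg_right] at b
    linarith
  have h2 : ∀ y ∈ Submodule.span ℝ (L : Set (EuclideanSpace ℝ (Fin n))), ⟪x, y⟫ = 0 := by
    intro y hy
    induction hy using Submodule.span_induction with
    | mem y hy => exact h1 y hy
    | zero => simp
    | add a b _ _ ha hb => rw [inner_add_right, ha, hb, add_zero]
    | smul c a _ ha => rw [inner_smul_right, ha, mul_zero]
  have h3 := h2 x (by rw [IsZLattice.span_top]; trivial)
  simpa using h3

lemma errInv_spec (n : ℕ) (hn : 0 < n)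
    (L : Submodule ℤ (EuclideanSpace ℝ (Fin n))) [DiscreteTopology L] [IsZLattice ℝ L]
    {ε : ℝ} (hε0 : 0 < ε) (hε1 : ε < 1) :
    0 < errInv n ε (L : Set (EuclideanSpace ℝ (Fin n))) ∧
    gaussMeasure n 1 (errInv n ε (L : Set (EuclideanSpace ℝ (Fin n))) •
      voronoi n (L : Set (EuclideanSpace ℝ (Fin n))))ᶜ ≤ ENNReal.ofReal ε := by
  set S := (L : Set (EuclideanSpace ℝ (Fin n))) with hS
  have hprob := isProb_gaussMeasure n one_pos
  set T := {s : ℝ | 0 < s ∧ gaussMeasure n 1 ((s • voronoi n S)ᶜ) ≤ ENNReal.ofReal ε} with hT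
  have hmem : ∀ s : ℝ, 0 < s → gaussMeasure n 1 (scaledV n S s)ᶜ ≤ ENNReal.ofReal ε → s ∈ T := by
    intro s hs h
    refine ⟨hs, ?_⟩
    rwa [smul_voronoi_eq n S hs]
  have hne : T.Nonempty := by
    have ht : Tendsto (fun k : ℕ => gaussMeasure n 1 (scaledV n S ((k:ℝ) + 1))ᶜ) atTop
        (nhds (gaussMeasure n 1 (⋂ k : ℕ, (scaledV n S ((k:ℝ) + 1))ᶜ))) := by
      apply tendsto_measure_iInter_atTop
      · intro k
        exact (isClosed_scaledV n S _).measurableSet.compl.nullMeasurableSet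
      · intro a b hab
        apply Set.compl_subset_compl.2
        apply scaledV_mono
        have : (a:ℝ) ≤ b := by exact_mod_cast hab
        linarith
      · exact ⟨0, measure_ne_top _ _⟩
    have he : (⋂ k : ℕ, (scaledV n S ((k:ℝ) + 1))ᶜ) = ∅ := by
      ext x
      obtain ⟨k, hk⟩ := exists_mem_scaledV n L x
      simp only [Set.mem_iInter, Set.mem_compl_iff, Set.mem_empty_iff_false, iff_false, not_forall,
        not_not]
      exact ⟨k, hk⟩
    rw [he, measure_empty] at ht
    obtain ⟨k, hk⟩ := (ht.eventually (gt_mem_nhds (ENNReal.ofReal_pos.2 hε0))).exists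
    exact ⟨(k:ℝ) + 1, hmem _ (by positivity) hk.le⟩
  have hbdd : BddBelow T := ⟨0, fun s hs => hs.1.le⟩
  have hdef : errInv n ε S = sInf T := rfl
  rw [hdef]
  set s0 := sInf T
  have hs0 : 0 ≤ s0 := le_csInf hne fun s hs => hs.1.le
  have hU : ∀ k : ℕ, gaussMeasure n 1 (scaledV n S (s0 + 1 / ((k:ℝ) + 1)))ᶜ ≤ ENNReal.ofReal ε := by
    intro k
    obtain ⟨t, ht, htlt⟩ := exists_lt_of_csInf_lt hne
      (show s0 < s0 + 1 / ((k:ℝ) + 1) by have : 0 < 1 / ((k:ℝ) + 1) := by positivity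
                                         linarith)
    have h2 := ht.2
    rw [smul_voronoi_eq n S ht.1] at h2
    exact (measure_mono (Set.compl_subset_compl.2 (scaledV_mono n S htlt.le))).trans h2
  have hm : Monotone fun k : ℕ => (scaledV n S (s0 + 1 / ((k:ℝ) + 1)))ᶜ := by
    intro a b hab
    apply Set.compl_subset_compl.2
    apply scaledV_mono
    have := Nat.one_div_le_one_div (α := ℝ) hab
    linarith
  have hsub : (scaledV n S s0)ᶜ ⊆ ⋃ k : ℕ, (scaledV n S (s0 + 1 / ((k:ℝ) + 1)))ᶜ := by
    intro x hx
    simp only [scaledV, Set.mem_compl_iff, Set.mem_ofPred_eq, not_forall, not_le] at hx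
    obtain ⟨y, hy, hlt⟩ := hx
    have ht : Tendsto (fun k : ℕ => (s0 + 1 / ((k:ℝ) + 1)) * (‖y‖ ^ 2 / 2)) atTop
        (nhds ((s0 + 0) * (‖y‖ ^ 2 / 2))) :=
      (tendsto_const_nhds.add tendsto_one_div_add_atTop_nhds_zero_nat).mul_const _
    rw [add_zero] at ht
    obtain ⟨k, hk⟩ := (ht.eventually (gt_mem_nhds hlt)).exists
    refine Set.mem_iUnion.2 ⟨k, fun hmem => ?_⟩
    exact absurd (hmem y hy) (not_le.2 hk)
  have hmain : gaussMeasure n 1 (scaledV n S s0)ᶜ ≤ ENNReal.ofReal ε := by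
    refine (measure_mono hsub).trans ?_
    rw [hm.measure_iUnion]
    exact iSup_le hU
  have hpos : 0 < s0 := by
    rcases hs0.lt_or_eq with h | h
    · exact h
    exfalso
    rw [← h] at hmain
    have : Nontrivial (EuclideanSpace ℝ (Fin n)) := by
      apply Module.nontrivial_of_finrank_pos (R := ℝ)
      simpa using hn
    have h0 : gaussMeasure n 1 {0} = 0 := by
      apply withDensity_absolutelyContinuous
      exact measure_singleton 0
    have h1 : gaussMeasure n 1 ({0} : Set (EuclideanSpace ℝ (Fin n)))ᶜ = 1 := by
      rw [prob_compl_eq_one_iff (measurableSet_singleton 0), h0]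
    have h2 := (measure_mono (μ := gaussMeasure n 1)
      (Set.compl_subset_compl.2 (scaledV_zero n L))).trans hmain
    rw [h1] at h2
    have : ENNReal.ofReal ε < 1 := by simpa using hε1
    exact absurd h2 (not_le.2 this)
  refine ⟨hpos, ?_⟩
  rwa [smul_voronoi_eq n S hpos]

/-- periodization of `g` along `s • L` -/
def perio (n : ℕ) (L : Submodule ℤ (EuclideanSpace ℝ (Fin n))) (s : ℝ)
    (g : EuclideanSpace ℝ (Fin n) → ℝ≥0∞) (t : EuclideanSpace ℝ (Fin n)) : ℝ≥0∞ :=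
  ∑' y : L, g (t + s • (y : EuclideanSpace ℝ (Fin n)))

section
variable (n : ℕ) (L : Submodule ℤ (EuclideanSpace ℝ (Fin n))) [DiscreteTopology L] [IsZLattice ℝ L]

lemma measurable_perio (s : ℝ) {g : EuclideanSpace ℝ (Fin n) → ℝ≥0∞} (hg : Measurable g) :
    Measurable (perio n L s g) := by
  unfold perio
  exact Measurable.tsum fun y => hg.comp (by fun_prop)

lemma perio_add (s : ℝ) (g : EuclideanSpace ℝ (Fin n) → ℝ≥0∞) (t : EuclideanSpace ℝ (Fin n)) (z : L) :
    perio n L s g (t + s • (z : EuclideanSpace ℝ (Fin n))) = perio n L s g t := by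
  unfold perio
  rw [← (Equiv.addLeft z).tsum_eq (fun y : L => g (t + s • (y : EuclideanSpace ℝ (Fin n))))]
  simp [add_assoc, smul_add]

lemma lintegral_unfold {s : ℝ} (hs : 0 < s) {D : Set (EuclideanSpace ℝ (Fin n))}
    (hD : IsAddFundamentalDomain L D volume)
    {h : EuclideanSpace ℝ (Fin n) → ℝ≥0∞} (hh : Measurable h) :
    ∫⁻ x, h x = ENNReal.ofReal (s ^ n) * ∫⁻ u in D, perio n L s h (s • u) := by
  have e1 : ∫⁻ u in D, perio n L s h (s • u) = ∫⁻ u, h (s • u) := by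
    have : VAddInvariantMeasure L (EuclideanSpace ℝ (Fin n)) volume :=
      (inferInstance : VAddInvariantMeasure L.toAddSubgroup (EuclideanSpace ℝ (Fin n)) volume)
    rw [hD.lintegral_eq_tsum'']
    unfold perio
    rw [lintegral_tsum (f := fun (y : L) (u : EuclideanSpace ℝ (Fin n)) =>
      h (s • u + s • (y : EuclideanSpace ℝ (Fin n)))) (fun y => (hh.comp (by fun_prop)).aemeasurable)]
    refine tsum_congr fun y => lintegral_congr fun u => ?_
    congr 1
    rw [Submodule.vadd_def, vadd_eq_add, smul_add, add_comm]
  have e2 : ∫⁻ u, h (s • u) = ENNReal.ofReal |(s ^ n)⁻¹| * ∫⁻ x, h x := by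
    have := Measure.map_addHaar_smul (volume : Measure (EuclideanSpace ℝ (Fin n))) hs.ne'
    rw [finrank_euclideanSpace_fin] at this
    rw [← lintegral_map hh (by fun_prop : Measurable fun u : EuclideanSpace ℝ (Fin n) => s • u),
      this, lintegral_smul_measure, smul_eq_mul]
  rw [e1, e2, ← mul_assoc, ← ENNReal.ofReal_mul (by positivity), abs_of_pos (by positivity),
    mul_inv_cancel₀ (by positivity), ENNReal.ofReal_one, one_mul]

/-- unfolding with a periodic weight -/
lemma lintegral_unfold_mul {s : ℝ} (hs : 0 < s) {D : Set (EuclideanSpace ℝ (Fin n))}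
    (hD : IsAddFundamentalDomain L D volume)
    {F q : EuclideanSpace ℝ (Fin n) → ℝ≥0∞} (hF : Measurable F) (hq : Measurable q)
    (hper : ∀ t, ∀ z : L, q (t + s • (z : EuclideanSpace ℝ (Fin n))) = q t) :
    ∫⁻ x, F x * q x = ENNReal.ofReal (s ^ n) * ∫⁻ u in D, perio n L s F (s • u) * q (s • u) := by
  rw [lintegral_unfold n L hs hD (h := fun x => F x * q x) (hF.mul hq)]
  congr 1
  refine lintegral_congr fun u => ?_
  unfold perio
  rw [← ENNReal.tsum_mul_right]
  exact tsum_congr fun y => by simp [hper]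

/-- the disintegration inequality -/
lemma lintegral_cond_le {s : ℝ} (hs : 0 < s) {F g : EuclideanSpace ℝ (Fin n) → ℝ≥0∞}
    (hF : Measurable F) (hg : Measurable g) :
    ∫⁻ t, perio n L s (fun x => F x * g x) t / perio n L s F t ∂(volume.withDensity F) ≤
      ∫⁻ x, g x ∂(volume.withDensity F) := by
  have hD := ZLattice.isAddFundamentalDomain (Module.Free.chooseBasis ℤ L)
    (volume : Measure (EuclideanSpace ℝ (Fin n)))
  have hq : Measurable fun t => perio n L s (fun x => F x * g x) t / perio n L s F t :=
    (measurable_perio n L s (hF.mul hg)).div (measurable_perio n L s hF)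
  rw [lintegral_withDensity_eq_lintegral_mul _ hF hq, lintegral_withDensity_eq_lintegral_mul _ hF hg]
  simp only [Pi.mul_apply]
  rw [lintegral_unfold_mul n L hs hD hF hq (fun t z => by rw [perio_add, perio_add]),
    lintegral_unfold n L hs hD (h := fun x => F x * g x) (hF.mul hg)]
  gcongr with u
  exact ENNReal.mul_div_le

lemma ae_perio_ne_top {s : ℝ} (hs : 0 < s) {F : EuclideanSpace ℝ (Fin n) → ℝ≥0∞}
    (hF : Measurable F) (hfin : ∫⁻ x, F x ≠ ∞) :
    ∀ᵐ t ∂(volume.withDensity F), perio n L s F t ≠ ∞ := by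
  have hD := ZLattice.isAddFundamentalDomain (Module.Free.chooseBasis ℤ L)
    (volume : Measure (EuclideanSpace ℝ (Fin n)))
  have hm := measurable_perio n L s hF
  have hA : MeasurableSet {t | perio n L s F t = ∞} := hm (measurableSet_singleton ∞)
  rw [ae_iff]
  simp only [not_not]
  have hq : Measurable (Set.indicator {t | perio n L s F t = ∞} (fun _ => (1 : ℝ≥0∞))) :=
    measurable_const.indicator hA
  have e : volume.withDensity F {t | perio n L s F t = ∞} =
      ∫⁻ x, F x * Set.indicator {t | perio n L s F t = ∞} (fun _ => (1 : ℝ≥0∞)) x := by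
    rw [withDensity_apply _ hA, ← lintegral_indicator hA]
    refine lintegral_congr fun x => ?_
    by_cases hx : x ∈ {t | perio n L s F t = ∞} <;> simp [hx]
  rw [e, lintegral_unfold_mul n L hs hD hF hq]
  · have h1 : ∫⁻ u in ZSpan.fundamentalDomain
        ((Module.Free.chooseBasis ℤ L).ofZLatticeBasis ℝ L), perio n L s F (s • u) ≠ ∞ := by
      intro h
      rw [lintegral_unfold n L hs hD hF, h, ENNReal.mul_top] at hfin
      · exact hfin rfl
      · simp; positivity
    have h2 := ae_lt_top' (hm.comp (by fun_prop : Measurable fun u : EuclideanSpace ℝ (Fin n) => s • u)).aemeasurable h1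
    rw [mul_eq_zero]
    right
    refine (lintegral_congr_ae (g := fun _ => 0) ?_).trans lintegral_zero
    filter_upwards [h2] with u hu
    have : s • u ∉ {t | perio n L s F t = ∞} := hu.ne
    simp [this]
  · intro t z
    simp only [Set.indicator, Set.mem_ofPred_eq, perio_add]

/-- the lower-tail estimate for the periodized density -/
lemma measure_perio_lt {s : ℝ} (hs : 0 < s) {F : EuclideanSpace ℝ (Fin n) → ℝ≥0∞}
    (hF : Measurable F) (c : ℝ≥0∞) :
    volume.withDensity F {t | perio n L s F t < c} ≤
      ENNReal.ofReal (s ^ n) * (c * ENNReal.ofReal (ZLattice.covolume L volume)) := by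
  have hD := ZLattice.isAddFundamentalDomain (Module.Free.chooseBasis ℤ L)
    (volume : Measure (EuclideanSpace ℝ (Fin n)))
  have hm := measurable_perio n L s hF
  have hA : MeasurableSet {t | perio n L s F t < c} := hm measurableSet_Iio
  have hq : Measurable (Set.indicator {t | perio n L s F t < c} (fun _ => (1 : ℝ≥0∞))) :=
    measurable_const.indicator hA
  have e : volume.withDensity F {t | perio n L s F t < c} =
      ∫⁻ x, F x * Set.indicator {t | perio n L s F t < c} (fun _ => (1 : ℝ≥0∞)) x := by
    rw [withDensity_apply _ hA, ← lintegral_indicator hA]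
    refine lintegral_congr fun x => ?_
    by_cases hx : x ∈ {t | perio n L s F t < c} <;> simp [hx]
  rw [e, lintegral_unfold_mul n L hs hD hF hq]
  · have hb := ZSpan.fundamentalDomain_isBounded ((Module.Free.chooseBasis ℤ L).ofZLatticeBasis ℝ L)
    have hc : ENNReal.ofReal (ZLattice.covolume L volume) = volume (ZSpan.fundamentalDomain
        ((Module.Free.chooseBasis ℤ L).ofZLatticeBasis ℝ L)) := by
      rw [ZLattice.covolume_eq_measure_fundamentalDomain L volume hD, Measure.real,
        ENNReal.ofReal_toReal hb.measure_lt_top.ne]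
    rw [hc, ← setLIntegral_const]
    gcongr with u
    by_cases hx : s • u ∈ {t | perio n L s F t < c}
    · simpa [hx] using (le_of_lt hx)
    · simp [hx]
  · intro t z
    simp only [Set.indicator, Set.mem_ofPred_eq, perio_add]

end

lemma tsum_coset (n : ℕ) (L : Submodule ℤ (EuclideanSpace ℝ (Fin n))) {s : ℝ} (hs : 0 < s)
    (t : EuclideanSpace ℝ (Fin n)) (g : EuclideanSpace ℝ (Fin n) → ℝ) :
    ∑' x : coset n (s • (L : Set (EuclideanSpace ℝ (Fin n)))) t, g x =
      ∑' y : L, g (t + s • (y : EuclideanSpace ℝ (Fin n))) := by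
  have hmem : ∀ y : L, t + s • (y : EuclideanSpace ℝ (Fin n)) ∈
      coset n (s • (L : Set (EuclideanSpace ℝ (Fin n)))) t := by
    intro y
    change t + s • (y : EuclideanSpace ℝ (Fin n)) - t ∈ s • (L : Set (EuclideanSpace ℝ (Fin n)))
    rw [add_sub_cancel_left]
    exact Set.smul_mem_smul_set y.2
  let e : L → coset n (s • (L : Set (EuclideanSpace ℝ (Fin n)))) t := fun y => ⟨_, hmem y⟩
  have he : Function.Bijective e := by
    constructor
    · intro a b hab
      have := congrArg Subtype.val hab
      simp only [e] at this
      have := add_left_cancel this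
      exact Subtype.ext (smul_right_injective _ hs.ne' this)
    · rintro ⟨x, hx⟩
      obtain ⟨y, hy, hxy⟩ := hx
      refine ⟨⟨y, hy⟩, Subtype.ext ?_⟩
      simp only [e]
      have hxy' : s • y = x - t := hxy
      rw [hxy']
      abel
  exact ((Equiv.ofBijective e he).tsum_eq (fun x => g x)).symm

lemma weighted_var {ι : Type*} {f Y : ι → ℝ} {m B : ℝ} (hf : ∀ i, 0 ≤ f i) (hY : ∀ i, 0 ≤ Y i)
    (hs : Summable f) (hG : 0 < ∑' i, f i) (hv : Summable fun i => f i * (Y i - m) ^ 2)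
    (hB : (∑' i, f i * (Y i - m) ^ 2) / (∑' i, f i) ≤ B ^ 2) (hB0 : 0 ≤ B) :
    (Summable fun i => f i * Y i) ∧ |(∑' i, f i * Y i) / (∑' i, f i) - m| ≤ B := by
  have hfY : Summable fun i => f i * Y i := by
    refine Summable.of_nonneg_of_le (fun i => mul_nonneg (hf i) (hY i)) (fun i => ?_)
      (hv.add (hs.mul_left (m + 1)))
    nlinarith [mul_nonneg (hf i) (sq_nonneg (Y i - m - 1 / 2)), hf i]
  refine ⟨hfY, ?_⟩
  set G := ∑' i, f i
  set a := (∑' i, f i * Y i) / G - m with ha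
  have hSY : ∑' i, f i * Y i = (a + m) * G := by
    rw [ha]; field_simp; ring
  have key : 0 ≤ ∑' i, f i * (Y i - m - a) ^ 2 :=
    tsum_nonneg fun i => mul_nonneg (hf i) (sq_nonneg _)
  have e : ∑' i, f i * (Y i - m - a) ^ 2 =
      ∑' i, f i * (Y i - m) ^ 2 - 2 * a * ((a + m) * G) + (2 * a * m + a ^ 2) * G := by
    have h1 := (hv.hasSum.sub (hfY.hasSum.mul_left (2 * a))).add
      (hs.hasSum.mul_left (2 * a * m + a ^ 2))
    rw [hSY] at h1
    rw [← h1.tsum_eq]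
    refine tsum_congr fun i => ?_
    ring
  rw [e] at key
  rw [div_le_iff₀ hG] at hB
  have : a ^ 2 ≤ B ^ 2 := by
    have : a ^ 2 * G ≤ B ^ 2 * G := by nlinarith
    exact le_of_mul_le_mul_right this hG
  exact abs_le_of_sq_le_sq this hB0

lemma entropy_formula (n : ℕ) {σ : ℝ} (hσ : 0 < σ) {ι : Type*} (z : ι → EuclideanSpace ℝ (Fin n))
    (hs : Summable fun i => gaussF n σ (z i)) (hG : 0 < ∑' i, gaussF n σ (z i))
    (hY : Summable fun i => gaussF n σ (z i) * ‖z i‖ ^ 2) :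
    -∑' i, gaussF n σ (z i) / (∑' i, gaussF n σ (z i)) *
      Real.log (gaussF n σ (z i) / (∑' i, gaussF n σ (z i))) =
    n / 2 * Real.log (2 * π * σ ^ 2) +
      (∑' i, gaussF n σ (z i) * ‖z i‖ ^ 2) / (∑' i, gaussF n σ (z i)) / (2 * σ ^ 2) +
      Real.log (∑' i, gaussF n σ (z i)) := by
  set G := ∑' i, gaussF n σ (z i) with hGdef
  have hp : 0 < 2 * π * σ ^ 2 := by have := Real.pi_pos; positivity
  have hl : ∀ i, Real.log (gaussF n σ (z i) / G) =
      -(n / 2 * Real.log (2 * π * σ ^ 2)) - ‖z i‖ ^ 2 / (2 * σ ^ 2) - Real.log G := by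
    intro i
    rw [Real.log_div (gaussF_pos n hσ _).ne' hG.ne']
    unfold gaussF
    rw [Real.log_mul (Real.rpow_pos_of_pos hp _).ne' (Real.exp_pos _).ne', Real.log_exp,
      Real.log_rpow hp]
    ring
  have h1 := (hs.hasSum.mul_left ((-(n / 2 * Real.log (2 * π * σ ^ 2)) - Real.log G) / G)).sub
    (hY.hasSum.mul_left (1 / (G * (2 * σ ^ 2))))
  have e : ∑' i, gaussF n σ (z i) / G * Real.log (gaussF n σ (z i) / G) = _ :=
    Eq.trans (tsum_congr fun i => by rw [hl]; field_simp; ring) h1.tsum_eq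
  rw [e, ← hGdef]
  field_simp
  ring

lemma final_numeric (n : ℕ) (hn : 16 ≤ n) {σs σw e0 cv γ σeff s E G : ℝ}
    (hσs : 0 < σs) (hσw : 0 < σw) (he0 : 0 < e0) (hcv : 0 < cv)
    (hσeff : σeff = Real.sqrt (σs ^ 2 * σw ^ 2 / (σs ^ 2 + σw ^ 2)))
    (hs : s = e0 * σeff)
    (hγ : γ = e0 ^ 2 * cv ^ (2 / (n : ℝ)) / (2 * π * Real.exp 1))
    (hE : n * σs ^ 2 - 4 * Real.sqrt n * σs ^ 2 ≤ E)
    (hG : Real.exp (-4) / (s ^ n * cv) ≤ G) :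
    (1 / 2) * Real.log (1 + σs ^ 2 / σw ^ 2) -
          ((1 / 2) * Real.log γ + 2 / Real.sqrt n + 4 / (n : ℝ)) ≤
        (1 / (n : ℝ)) * (n / 2 * Real.log (2 * π * σs ^ 2) + E / (2 * σs ^ 2) + Real.log G) := by
  have hn0 : (0:ℝ) < n := by exact_mod_cast (by omega : 0 < n)
  have hpi := Real.pi_pos
  have hσe : 0 < σeff := by rw [hσeff]; apply Real.sqrt_pos.2; positivity
  have hs0 : 0 < s := by rw [hs]; positivity
  have hlσe : Real.log σeff = (2 * Real.log σs + 2 * Real.log σw - Real.log (σs ^ 2 + σw ^ 2)) / 2 := by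
    rw [hσeff, Real.log_sqrt (by positivity), Real.log_div (by positivity) (by positivity),
      Real.log_mul (by positivity) (by positivity), Real.log_pow, Real.log_pow]
    push_cast; ring
  have hls : Real.log s = Real.log e0 + Real.log σeff := by
    rw [hs, Real.log_mul he0.ne' hσe.ne']
  have hlγ : Real.log γ = 2 * Real.log e0 + 2 / n * Real.log cv - (Real.log (2 * π) + 1) := by
    rw [hγ, Real.log_div (by positivity) (by positivity), Real.log_mul (by positivity) (by positivity),
      Real.log_mul (by positivity) (by positivity), Real.log_pow, Real.log_rpow hcv, Real.log_exp]
    push_cast; ring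
  have hl1 : Real.log (1 + σs ^ 2 / σw ^ 2) = Real.log (σs ^ 2 + σw ^ 2) - 2 * Real.log σw := by
    have : 1 + σs ^ 2 / σw ^ 2 = (σs ^ 2 + σw ^ 2) / σw ^ 2 := by field_simp; ring
    rw [this, Real.log_div (by positivity) (by positivity), Real.log_pow]
    push_cast; ring
  have hl2 : Real.log (2 * π * σs ^ 2) = Real.log (2 * π) + 2 * Real.log σs := by
    rw [Real.log_mul (by positivity) (by positivity), Real.log_pow]
    push_cast; ring
  have hlG : -4 - (n * Real.log s + Real.log cv) ≤ Real.log G := by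
    have := Real.log_le_log (by positivity) hG
    rwa [Real.log_div (by positivity) (by positivity), Real.log_exp,
      Real.log_mul (by positivity) (by positivity), Real.log_pow] at this
  have hE2 : (n - 4 * Real.sqrt n) / 2 ≤ E / (2 * σs ^ 2) := by
    rw [le_div_iff₀ (by positivity)]
    linarith
  have hsq : 2 / Real.sqrt n = 2 * Real.sqrt n / n := by
    rw [div_eq_div_iff (Real.sqrt_pos.2 hn0).ne' hn0.ne']
    rw [mul_assoc, Real.mul_self_sqrt hn0.le]
  have hfin : (1 / (n : ℝ)) * (n / 2 * Real.log (2 * π * σs ^ 2) + (n - 4 * Real.sqrt n) / 2 +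
      (-4 - (n * Real.log s + Real.log cv))) ≤ (1 / (n : ℝ)) * (n / 2 * Real.log (2 * π * σs ^ 2) +
        E / (2 * σs ^ 2) + Real.log G) := by
    apply mul_le_mul_of_nonneg_left _ (by positivity)
    linarith
  refine le_trans (le_of_eq ?_) hfin
  rw [hl1, hlγ, hsq, hls, hlσe, hl2]
  field_simp
  ring

lemma setIntegral_gaussF (n : ℕ) {σ : ℝ} (hσ : 0 < σ) {A : Set (EuclideanSpace ℝ (Fin n))}
    (hA : MeasurableSet A) : ∫ w in A, gaussF n σ w = (gaussMeasure n σ A).toReal := by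
  rw [gaussMeasure, withDensity_apply _ hA,
    ← ofReal_integral_eq_lintegral_ofReal (integrable_gaussF n hσ).integrableOn
      (Filter.Eventually.of_forall fun x => (gaussF_pos n hσ x).le), ENNReal.toReal_ofReal]
  exact integral_nonneg fun x => (gaussF_pos n hσ x).le

lemma perio_ofReal (n : ℕ) (L : Submodule ℤ (EuclideanSpace ℝ (Fin n))) (s : ℝ)
    {g : EuclideanSpace ℝ (Fin n) → ℝ} (hg : ∀ x, 0 ≤ g x) {t : EuclideanSpace ℝ (Fin n)}
    (h : perio n L s (fun x => ENNReal.ofReal (g x)) t ≠ ∞) :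
    (Summable fun y : L => g (t + s • (y : EuclideanSpace ℝ (Fin n)))) ∧
    perio n L s (fun x => ENNReal.ofReal (g x)) t =
      ENNReal.ofReal (∑' y : L, g (t + s • (y : EuclideanSpace ℝ (Fin n)))) := by
  have hs : Summable fun y : L => g (t + s • (y : EuclideanSpace ℝ (Fin n))) := by
    have := ENNReal.summable_toReal h
    refine this.congr fun y => ?_
    rw [ENNReal.toReal_ofReal (hg _)]
  refine ⟨hs, ?_⟩
  rw [ENNReal.ofReal_tsum_of_nonneg (fun y => hg _) hs]
  rfl

lemma lintegral_decode (n : ℕ) {σs σw σeff a b : ℝ} (hσs : 0 < σs) (hσw : 0 < σw)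
    (hσe : 0 < σeff) (h : a ^ 2 * σs ^ 2 + b ^ 2 * σw ^ 2 = σeff ^ 2)
    {K : Set (EuclideanSpace ℝ (Fin n))} (hK : MeasurableSet K) :
    Measurable (fun x => gaussMeasure n σw {w | a • x + b • w ∉ K}) ∧
    ∫⁻ x, gaussMeasure n σw {w | a • x + b • w ∉ K} ∂(gaussMeasure n σs) =
      gaussMeasure n σeff Kᶜ := by
  have := isProb_gaussMeasure n hσs
  have := isProb_gaussMeasure n hσw
  have hf : Measurable fun p : EuclideanSpace ℝ (Fin n) × EuclideanSpace ℝ (Fin n) =>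
    a • p.1 + b • p.2 := by fun_prop
  have hm : MeasurableSet ((fun p : EuclideanSpace ℝ (Fin n) × EuclideanSpace ℝ (Fin n) =>
    a • p.1 + b • p.2) ⁻¹' Kᶜ) := hf hK.compl
  refine ⟨measurable_measure_prodMk_left hm, ?_⟩
  rw [← gaussMeasure_map_comb n hσs hσw hσe h, Measure.map_apply hf hK.compl,
    Measure.prod_apply hm]
  rfl

lemma gaussMeasure_smul_compl (n : ℕ) {ρ e : ℝ} (hρ : 0 < ρ) (he : 0 < e)
    (S : Set (EuclideanSpace ℝ (Fin n))) :
    gaussMeasure n ρ ((e * ρ) • voronoi n S)ᶜ = gaussMeasure n 1 (e • voronoi n S)ᶜ := by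
  have h := gaussMeasure_map_smul n one_pos hρ
  rw [mul_one] at h
  have hK : MeasurableSet ((e * ρ) • voronoi n S) := by
    rw [smul_voronoi_eq n S (mul_pos he hρ)]
    exact (isClosed_scaledV n S _).measurableSet
  rw [← h, Measure.map_apply (by fun_prop) hK.compl]
  congr 1
  ext x
  simp only [Set.mem_preimage, Set.mem_compl_iff]
  rw [mul_comm, mul_smul, Set.smul_mem_smul_set_iff₀ hρ.ne']

/-- the three properties at a good dither -/
lemma good_point (n : ℕ) (hn : 16 ≤ n)
    (L : Submodule ℤ (EuclideanSpace ℝ (Fin n))) [DiscreteTopology L] [IsZLattice ℝ L]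
    {σs σw ε α σeff s γ e0 : ℝ} (hσs : 0 < σs) (hσw : 0 < σw) (hε0 : 0 < ε) (he0 : 0 < e0)
    (hs : 0 < s)
    (hσeff : σeff = Real.sqrt (σs ^ 2 * σw ^ 2 / (σs ^ 2 + σw ^ 2)))
    (hsε : s = e0 * σeff)
    (hγ : γ = e0 ^ 2 * ZLattice.covolume L volume ^ (2 / (n : ℝ)) / (2 * π * Real.exp 1))
    (t : EuclideanSpace ℝ (Fin n))
    (h0 : perio n L s (fun x => ENNReal.ofReal (gaussF n σs x)) t ≠ ∞)
    (h1 : perio n L s (fun x => ENNReal.ofReal (gaussF n σs x) * gaussMeasure n σw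
      {w | (1 - α) • x + α • w ∉ s • voronoi n (L : Set (EuclideanSpace ℝ (Fin n)))}) t /
      perio n L s (fun x => ENNReal.ofReal (gaussF n σs x)) t < ENNReal.ofReal (6 * ε))
    (h2 : perio n L s (fun x => ENNReal.ofReal (gaussF n σs x) *
      ENNReal.ofReal ((‖x‖ ^ 2 - n * σs ^ 2) ^ 2)) t /
      perio n L s (fun x => ENNReal.ofReal (gaussF n σs x)) t < ENNReal.ofReal (16 * n * σs ^ 4))
    (h3 : ENNReal.ofReal (Real.exp (-4) / (s ^ n * ZLattice.covolume L volume)) ≤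
      perio n L s (fun x => ENNReal.ofReal (gaussF n σs x)) t) :
      (∑' x : coset n (s • (L : Set (EuclideanSpace ℝ (Fin n)))) t,
        (gaussF n σs x / gaussMass n σs (coset n (s • (L : Set (EuclideanSpace ℝ (Fin n)))) t)) *
          ∫ w in {w : EuclideanSpace ℝ (Fin n) |
              (1 - α) • (x : EuclideanSpace ℝ (Fin n)) + α • w ∉ s • voronoi n (L : Set (EuclideanSpace ℝ (Fin n)))},
            gaussF n σw w) ≤ 6 * ε ∧
      (∑' x : coset n (s • (L : Set (EuclideanSpace ℝ (Fin n)))) t,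
        ‖(x : EuclideanSpace ℝ (Fin n))‖ ^ 2 *
          (gaussF n σs x / gaussMass n σs (coset n (s • (L : Set (EuclideanSpace ℝ (Fin n)))) t)))
        ≤ (1 + 4 / Real.sqrt n) * n * σs ^ 2 ∧
      (1 / 2) * Real.log (1 + σs ^ 2 / σw ^ 2) -
          ((1 / 2) * Real.log γ + 2 / Real.sqrt n + 4 / (n : ℝ)) ≤
        (1 / (n : ℝ)) * dgEntropy n σs (coset n (s • (L : Set (EuclideanSpace ℝ (Fin n)))) t) := by
  have hcv : 0 < ZLattice.covolume L volume := ZLattice.covolume_pos L volume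
  have hn0 : (0:ℝ) < n := by exact_mod_cast (by omega : 0 < n)
  have hmass : gaussMass n σs (coset n (s • (L : Set (EuclideanSpace ℝ (Fin n)))) t) =
      ∑' y : L, gaussF n σs (t + s • (y : EuclideanSpace ℝ (Fin n))) :=
    tsum_coset n L hs t (gaussF n σs)
  obtain ⟨hsum, hPF⟩ := perio_ofReal n L s (fun x => (gaussF_pos n hσs x).le) h0
  set G := ∑' y : L, gaussF n σs (t + s • (y : EuclideanSpace ℝ (Fin n))) with hG
  have hGpos : 0 < G := hsum.tsum_pos (fun y => (gaussF_pos n hσs _).le) 0 (gaussF_pos n hσs _)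
  have hG3 : Real.exp (-4) / (s ^ n * ZLattice.covolume L volume) ≤ G := by
    rw [hPF] at h3
    exact (ENNReal.ofReal_le_ofReal_iff hGpos.le).1 h3
  -- the second moment
  have hcomb : (fun x => ENNReal.ofReal (gaussF n σs x) *
      ENNReal.ofReal ((‖x‖ ^ 2 - n * σs ^ 2) ^ 2)) = fun x => ENNReal.ofReal (gaussF n σs x *
        (‖x‖ ^ 2 - n * σs ^ 2) ^ 2) := by
    ext x
    rw [ENNReal.ofReal_mul (gaussF_pos n hσs x).le]
  rw [hcomb] at h2
  have h2top : perio n L s (fun x => ENNReal.ofReal (gaussF n σs x *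
        (‖x‖ ^ 2 - n * σs ^ 2) ^ 2)) t ≠ ∞ := by
    intro h
    rw [h, ENNReal.top_div_of_ne_top h0] at h2
    exact absurd h2 (by simp)
  obtain ⟨hsum2, hP2⟩ := perio_ofReal n L s
    (fun x => mul_nonneg (gaussF_pos n hσs x).le (sq_nonneg _)) h2top
  rw [hP2, hPF, ← ENNReal.ofReal_div_of_pos hGpos,
    ENNReal.ofReal_lt_ofReal_iff (by positivity)] at h2
  obtain ⟨hsumY, hE⟩ := weighted_var (f := fun y : L => gaussF n σs (t + s • (y : EuclideanSpace ℝ (Fin n))))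
    (Y := fun y : L => ‖t + s • (y : EuclideanSpace ℝ (Fin n))‖ ^ 2) (m := n * σs ^ 2)
    (B := 4 * Real.sqrt n * σs ^ 2)
    (fun y => (gaussF_pos n hσs _).le) (fun y => by positivity) hsum hGpos hsum2
    (by
      refine h2.le.trans (le_of_eq ?_)
      rw [mul_pow, mul_pow, Real.sq_sqrt hn0.le]
      ring) (by positivity)
  rw [← hG] at hE
  set E := (∑' y : L, gaussF n σs (t + s • (y : EuclideanSpace ℝ (Fin n))) *
    ‖t + s • (y : EuclideanSpace ℝ (Fin n))‖ ^ 2) / G with hEdef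
  rw [abs_le] at hE
  refine ⟨?_, ?_, ?_⟩
  · have hK : MeasurableSet (s • voronoi n (L : Set (EuclideanSpace ℝ (Fin n)))) := by
      rw [smul_voronoi_eq n _ hs]
      exact (isClosed_scaledV n _ _).measurableSet
    have hA : ∀ x : EuclideanSpace ℝ (Fin n), MeasurableSet {w : EuclideanSpace ℝ (Fin n) |
        (1 - α) • x + α • w ∉ s • voronoi n (L : Set (EuclideanSpace ℝ (Fin n)))} := fun x =>
      (by fun_prop : Measurable fun w : EuclideanSpace ℝ (Fin n) => (1 - α) • x + α • w) hK.compl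
    rw [hmass]
    refine (tsum_coset n L hs t (fun x => gaussF n σs x / G * ∫ w in {w : EuclideanSpace ℝ (Fin n) |
        (1 - α) • x + α • w ∉ s • voronoi n (L : Set (EuclideanSpace ℝ (Fin n)))},
          gaussF n σw w)).trans_le ?_
    have hq := ENNReal.toReal_mono ENNReal.ofReal_ne_top h1.le
    rw [ENNReal.toReal_ofReal (by positivity)] at hq
    refine le_trans (le_of_eq ?_) hq
    have := isProb_gaussMeasure n hσw
    unfold perio
    rw [ENNReal.toReal_div, ENNReal.tsum_toReal_eq (fun y =>
      ENNReal.mul_ne_top ENNReal.ofReal_ne_top (measure_ne_top _ _))]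
    have hden : (∑' y : L, ENNReal.ofReal (gaussF n σs (t + s • (y : EuclideanSpace ℝ (Fin n))))).toReal = G := by
      change (perio n L s (fun x => ENNReal.ofReal (gaussF n σs x)) t).toReal = G
      rw [hPF, ENNReal.toReal_ofReal hGpos.le]
    rw [hden, ← tsum_div_const]
    refine tsum_congr fun y => ?_
    rw [setIntegral_gaussF n hσw (hA _), ENNReal.toReal_mul,
      ENNReal.toReal_ofReal (gaussF_pos n hσs _).le]
    ring
  · rw [hmass]
    refine (tsum_coset n L hs t (fun x => ‖x‖ ^ 2 * (gaussF n σs x / G))).trans_le ?_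
    have e : ∑' y : L, ‖t + s • (y : EuclideanSpace ℝ (Fin n))‖ ^ 2 *
        (gaussF n σs (t + s • (y : EuclideanSpace ℝ (Fin n))) / G) = E := by
      rw [hEdef, ← tsum_div_const]
      exact tsum_congr fun y => by ring
    rw [e]
    have hsq : (1 + 4 / Real.sqrt n) * n * σs ^ 2 = n * σs ^ 2 + 4 * Real.sqrt n * σs ^ 2 := by
      have : (n : ℝ) / Real.sqrt n = Real.sqrt n := Real.div_sqrt
      linear_combination 4 * σs ^ 2 * this
    rw [hsq]
    linarith [hE.2]
  · have hent : dgEntropy n σs (coset n (s • (L : Set (EuclideanSpace ℝ (Fin n)))) t) =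
        n / 2 * Real.log (2 * π * σs ^ 2) + E / (2 * σs ^ 2) + Real.log G := by
      rw [hEdef, hG, ← entropy_formula n hσs
        (fun y : L => t + s • (y : EuclideanSpace ℝ (Fin n))) hsum hGpos hsumY]
      unfold dgEntropy
      rw [hmass]
      congr 1
      exact tsum_coset n L hs t (fun x => gaussF n σs x / G * Real.log (gaussF n σs x / G))
    rw [hent]
    exact final_numeric n hn hσs hσw he0 hcv hσeff hsε hγ (by linarith [hE.1]) hG3

lemma markov_bound {X : Type*} [MeasurableSpace X] {μ : Measure X} {q : X → ℝ≥0∞} (hq : Measurable q)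
    {a b c : ℝ} (ha : 0 < a) (hc : 0 ≤ c) (hb : b ≤ c * a) (h : ∫⁻ x, q x ∂μ ≤ ENNReal.ofReal b) :
    μ {x | ENNReal.ofReal a ≤ q x} ≤ ENNReal.ofReal c := by
  have := mul_meas_ge_le_lintegral₀ (μ := μ) hq.aemeasurable (ENNReal.ofReal a)
  have h2 := (this.trans h).trans (ENNReal.ofReal_le_ofReal hb)
  rw [mul_comm c a, ENNReal.ofReal_mul ha.le] at h2
  exact (ENNReal.mul_le_mul_iff_right (by simpa using ha) ENNReal.ofReal_ne_top).1 h2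

/-- a Gaussian-random dither `t` yields, with probability at least 1/2, a discrete
Gaussian code on `s_ε·Λ + t` with decoding error at most `6ε`, power at most `(1+4/√n)nσ_s²`,
and per-symbol entropy within `(1/2)log γ(Λ,ε) + 2/√n + 4/n` of capacity. -/
theorem awgn_goodness_is_enough (n : ℕ) (hn : 16 ≤ n)
    (L : Submodule ℤ (EuclideanSpace ℝ (Fin n))) [DiscreteTopology L] [IsZLattice ℝ L]
    (σs σw ε : ℝ) (hσs : 0 < σs) (hσw : 0 < σw) (hε0 : 0 < ε) (hε1 : ε < 1)
    (α σeff sε γ : ℝ)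
    (hα : α = σs ^ 2 / (σs ^ 2 + σw ^ 2))
    (hσeff : σeff = Real.sqrt (σs ^ 2 * σw ^ 2 / (σs ^ 2 + σw ^ 2)))
    (hsε : sε = errInv n ε (L : Set (EuclideanSpace ℝ (Fin n))) * σeff)
    (hγ : γ = errInv n ε (L : Set (EuclideanSpace ℝ (Fin n))) ^ 2 *
        ZLattice.covolume L volume ^ (2 / (n : ℝ)) / (2 * π * Real.exp 1)) :
    2⁻¹ ≤ gaussMeasure n σs {t : EuclideanSpace ℝ (Fin n) |
      -- (1) the decoding error probability is at most 6ε
      (∑' x : coset n (sε • (L : Set (EuclideanSpace ℝ (Fin n)))) t,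
        (gaussF n σs x / gaussMass n σs (coset n (sε • (L : Set (EuclideanSpace ℝ (Fin n)))) t)) *
          ∫ w in {w : EuclideanSpace ℝ (Fin n) |
              (1 - α) • (x : EuclideanSpace ℝ (Fin n)) + α • w ∉ sε • voronoi n (L : Set (EuclideanSpace ℝ (Fin n)))},
            gaussF n σw w) ≤ 6 * ε ∧
      -- (2) the expected squared norm is at most (1 + 4/√n)·n·σ_s²
      (∑' x : coset n (sε • (L : Set (EuclideanSpace ℝ (Fin n)))) t,
        ‖(x : EuclideanSpace ℝ (Fin n))‖ ^ 2 *
          (gaussF n σs x / gaussMass n σs (coset n (sε • (L : Set (EuclideanSpace ℝ (Fin n)))) t)))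
        ≤ (1 + 4 / Real.sqrt n) * n * σs ^ 2 ∧
      -- (3) the per-symbol entropy is within (1/2)·log γ + 2/√n + 4/n of capacity
      (1 / 2) * Real.log (1 + σs ^ 2 / σw ^ 2) -
          ((1 / 2) * Real.log γ + 2 / Real.sqrt n + 4 / (n : ℝ)) ≤
        (1 / (n : ℝ)) * dgEntropy n σs (coset n (sε • (L : Set (EuclideanSpace ℝ (Fin n)))) t)} := by
  have hn0 : 0 < n := by omega
  have hn0' : (0:ℝ) < n := by exact_mod_cast hn0
  obtain ⟨he0, hmin⟩ := errInv_spec n hn0 L hε0 hε1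
  set e0 := errInv n ε (L : Set (EuclideanSpace ℝ (Fin n)))
  have hσe : 0 < σeff := by rw [hσeff]; apply Real.sqrt_pos.2; positivity
  have hs : 0 < sε := by rw [hsε]; positivity
  have hcv : 0 < ZLattice.covolume L volume := ZLattice.covolume_pos L volume
  have hprob := isProb_gaussMeasure n hσs
  have hvar : (1 - α) ^ 2 * σs ^ 2 + α ^ 2 * σw ^ 2 = σeff ^ 2 := by
    rw [hσeff, Real.sq_sqrt (by positivity), hα]
    field_simp
    ring
  have hK : MeasurableSet (sε • voronoi n (L : Set (EuclideanSpace ℝ (Fin n)))) := by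
    rw [smul_voronoi_eq n _ hs]
    exact (isClosed_scaledV n _ _).measurableSet
  have hFm := measurable_ofReal_gaussF n σs
  obtain ⟨hg1, hg1i⟩ := lintegral_decode n hσs hσw hσe hvar hK
  rw [hsε, gaussMeasure_smul_compl n hσe he0, ← hsε] at hg1i
  set F := fun x => ENNReal.ofReal (gaussF n σs x) with hF
  set g1 := fun x : EuclideanSpace ℝ (Fin n) => gaussMeasure n σw
      {w | (1 - α) • x + α • w ∉ sε • voronoi n (L : Set (EuclideanSpace ℝ (Fin n)))} with hg1def
  set g2 := fun x : EuclideanSpace ℝ (Fin n) => ENNReal.ofReal ((‖x‖ ^ 2 - n * σs ^ 2) ^ 2) with hg2def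
  have hg2 : Measurable g2 := by
    apply Measurable.ennreal_ofReal
    fun_prop
  have hg2i : ∫⁻ x, g2 x ∂(gaussMeasure n σs) ≤ ENNReal.ofReal (2 * n * σs ^ 4) := by
    obtain ⟨i1, i2⟩ := integral_variance_gaussF n hn0 hσs
    rw [gaussMeasure, lintegral_withDensity_eq_lintegral_mul _ hFm hg2, ← i2,
      ofReal_integral_eq_lintegral_ofReal i1 (Filter.Eventually.of_forall fun x =>
        mul_nonneg (sq_nonneg _) (gaussF_pos n hσs x).le)]
    refine le_of_eq (lintegral_congr fun x => ?_)
    rw [Pi.mul_apply, ENNReal.ofReal_mul (sq_nonneg _), mul_comm]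
  have hm0 := measurable_perio n L sε hFm
  have hm1 : Measurable fun t => perio n L sε (fun x => F x * g1 x) t / perio n L sε F t :=
    (measurable_perio n L sε (hFm.mul hg1)).div hm0
  have hm2 : Measurable fun t => perio n L sε (fun x => F x * g2 x) t / perio n L sε F t :=
    (measurable_perio n L sε (hFm.mul hg2)).div hm0
  have hB0 : gaussMeasure n σs {t | perio n L sε F t = ∞} = 0 := by
    have := ae_perio_ne_top n L hs hFm (by rw [lintegral_gaussF n hσs]; simp)
    rw [ae_iff] at this
    simp only [not_not] at this
    exact this
  have hB1 : gaussMeasure n σs {t | ENNReal.ofReal (6 * ε) ≤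
      perio n L sε (fun x => F x * g1 x) t / perio n L sε F t} ≤ ENNReal.ofReal (1 / 6) :=
    markov_bound hm1 (b := ε) (by positivity) (by norm_num) (by linarith)
      ((lintegral_cond_le n L hs hFm hg1).trans (hg1i.le.trans hmin))
  have hB2 : gaussMeasure n σs {t | ENNReal.ofReal (16 * n * σs ^ 4) ≤
      perio n L sε (fun x => F x * g2 x) t / perio n L sε F t} ≤ ENNReal.ofReal (1 / 8) :=
    markov_bound hm2 (b := 2 * n * σs ^ 4) (by positivity) (by norm_num) (by linarith)
      ((lintegral_cond_le n L hs hFm hg2).trans hg2i)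
  have hB3 : gaussMeasure n σs {t | perio n L sε F t <
      ENNReal.ofReal (Real.exp (-4) / (sε ^ n * ZLattice.covolume L volume))} ≤
      ENNReal.ofReal (1 / 5) := by
    refine (measure_perio_lt n L hs hFm _).trans ?_
    rw [← ENNReal.ofReal_mul (by positivity), ← ENNReal.ofReal_mul (by positivity)]
    apply ENNReal.ofReal_le_ofReal
    have e : sε ^ n * (Real.exp (-4) / (sε ^ n * ZLattice.covolume L volume) *
        ZLattice.covolume L volume) = Real.exp (-4) := by
      field_simp
    rw [e, Real.exp_neg, one_div]
    apply inv_anti₀ (by norm_num)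
    have := Real.add_one_le_exp (4:ℝ)
    linarith
  set good := {t : EuclideanSpace ℝ (Fin n) | _} with hgood
  have hcover : (Set.univ : Set (EuclideanSpace ℝ (Fin n))) ⊆ good ∪ (
      {t | perio n L sε F t = ∞} ∪ ({t | ENNReal.ofReal (6 * ε) ≤
      perio n L sε (fun x => F x * g1 x) t / perio n L sε F t} ∪ ({t | ENNReal.ofReal (16 * n * σs ^ 4) ≤
      perio n L sε (fun x => F x * g2 x) t / perio n L sε F t} ∪ {t | perio n L sε F t <
      ENNReal.ofReal (Real.exp (-4) / (sε ^ n * ZLattice.covolume L volume))}))) := by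
    intro t _
    by_contra hcon
    simp only [Set.mem_union, not_or] at hcon
    obtain ⟨c, c0, c1, c2, c3⟩ := hcon
    exact c (good_point n hn L hσs hσw hε0 he0 hs hσeff hsε hγ t c0 (not_le.1 c1) (not_le.1 c2)
      (not_lt.1 c3))
  have htot : (1 : ℝ≥0∞) ≤ gaussMeasure n σs good + ENNReal.ofReal (1 / 2) := by
    rw [← hprob.measure_univ]
    refine (measure_mono hcover).trans ((measure_union_le _ _).trans ?_)
    gcongr
    refine (measure_union_le _ _).trans ?_
    rw [hB0, zero_add]
    refine (measure_union_le _ _).trans ?_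
    refine (add_le_add hB1 ((measure_union_le _ _).trans (add_le_add hB2 hB3))).trans ?_
    rw [← ENNReal.ofReal_add (by norm_num) (by norm_num),
      ← ENNReal.ofReal_add (by norm_num) (by norm_num)]
    exact ENNReal.ofReal_le_ofReal (by norm_num)
  have hhalf : ENNReal.ofReal (1 / 2) = 2⁻¹ := by
    rw [one_div, ENNReal.ofReal_inv_of_pos (by norm_num)]
    simp
  rw [hhalf] at htot
  have h3 : (1 : ℝ≥0∞) - 2⁻¹ ≤ gaussMeasure n σs good := tsub_le_iff_right.2 htot
  rwa [ENNReal.one_sub_inv_two] at h3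
end
end

section
/- Let Λ' ⊂ ℝ^n be a full-rank lattice, σ_s, σ_w > 0, α = σ_s²/(σ_s²+σ_w²), σ_eff² = σ_s²σ_w²/(σ_s²+σ_w²). Let X ~ D_{Λ', σ_s} and W ~ N(0, σ_w² I_n) be independent and set W_eff = (1−α)X + αW. Then for every ε ∈ (0,1), Pr[‖W_eff‖ > √((1+ε)n) · σ_eff] ≤ exp(−(n/4)(ε² − ε³)). -/
open MeasureTheory Real Filter Pointwise
open scoped ENNReal RealInnerProductSpace

noncomputable section

/-- Positivity of a coset-restricted correlation sum. -/
lemma ent_pos {G : Type*} [AddCommGroup G] (H : AddSubgroup G) (h : G → ℝ)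
    (hs : Summable h) : 0 ≤ ∑' p : G, h p * ∑' e : H, h (p + e) := by
  classical
  have habs : Summable (fun p => |h p|) := hs.abs
  set K : G → ℝ := fun p => ∑' e : H, h (p + e) with hK
  have hinj : ∀ p : G, Function.Injective (fun e : H => p + (e : G)) := by
    intro p a b hab
    exact Subtype.ext (add_left_cancel hab)
  have hKper : ∀ (p : G) (e : H), K (p + e) = K p := by
    intro p e
    have := (Equiv.addLeft e).tsum_eq (fun e' : H => h (p + e'))
    simp only [hK]
    rw [← this]
    refine tsum_congr fun e' => ?_
    simp [add_assoc]
  have hKb : ∀ p, |K p| ≤ ∑' q, |h q| := by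
    intro p
    have h1 : Summable (fun e : H => |h (p + e)|) := habs.comp_injective (hinj p)
    calc |K p| ≤ ∑' e : H, |h (p + e)| := by
          have := norm_tsum_le_tsum_norm (f := fun e : H => h (p + e)) (by simpa using h1)
          simpa using this
      _ ≤ ∑' q, |h q| :=
          h1.tsum_le_tsum_of_inj (fun e : H => p + (e : G)) (hinj p)
            (fun c _ => abs_nonneg _) (fun i => le_rfl) habs
  have hsum : Summable (fun p => h p * K p) := by
    refine Summable.of_norm_bounded (habs.mul_right (∑' q, |h q|)) fun p => ?_
    rw [norm_mul]
    exact mul_le_mul_of_nonneg_left (hKb p) (abs_nonneg _)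
  let φ : (G ⧸ H) × H → G := fun x => Quotient.out x.1 + (x.2 : G)
  have hφ : Function.Bijective φ := by
    constructor
    · rintro ⟨q, e⟩ ⟨q', e'⟩ hh
      have hh' : Quotient.out q + (e : G) = Quotient.out q' + (e' : G) := hh
      have hq : q = q' := by
        have := congrArg (QuotientAddGroup.mk (s := H)) hh'
        rw [QuotientAddGroup.mk_add_of_mem _ e.2, QuotientAddGroup.mk_add_of_mem _ e'.2] at this
        simpa using this
      subst hq
      simpa using hh'
    · intro g
      refine ⟨(QuotientAddGroup.mk g, ⟨-Quotient.out (QuotientAddGroup.mk g : G ⧸ H) + g, ?_⟩), ?_⟩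
      · rw [← QuotientAddGroup.eq]; simp
      · simp [φ]
  let ψ := Equiv.ofBijective φ hφ
  have h1 : ∑' p, h p * K p = ∑' x : (G ⧸ H) × H, h (φ x) * K (φ x) :=
    (ψ.tsum_eq (fun p => h p * K p)).symm
  have h2 : Summable (fun x : (G ⧸ H) × H => h (φ x) * K (φ x)) :=
    (ψ.summable_iff (f := fun p => h p * K p)).2 hsum
  change 0 ≤ ∑' p, h p * K p
  rw [h1, h2.tsum_prod]
  refine tsum_nonneg fun q => ?_
  have : ∀ e : H, h (φ (q, e)) * K (φ (q, e)) = h (Quotient.out q + e) * K (Quotient.out q) := by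
    intro e
    simp only [φ]
    rw [hKper]
  simp_rw [this]
  rw [tsum_mul_right]
  exact mul_self_nonneg _

lemma ent_pos' {G : Type*} [AddCommGroup G] (h2 : ∀ a : G, a + a = 0 → a = 0) (h : G → ℝ)
    (hs : Summable h) : 0 ≤ ∑' x : G × G, h (x.1 - x.2) * h (x.1 + x.2) := by
  let D : G →+ G := AddMonoidHom.id G + AddMonoidHom.id G
  have hD : Function.Injective D := by
    rw [injective_iff_map_eq_zero]
    intro a ha
    exact h2 a ha
  have key := ent_pos D.range h hs
  let ρ : G × G ≃ G × G :=
    { toFun := fun x => (x.1 + x.2, x.2)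
      invFun := fun x => (x.1 - x.2, x.2)
      left_inv := fun x => by simp
      right_inv := fun x => by simp }
  have e1 : ∑' x : G × G, h (x.1 - x.2) * h (x.1 + x.2)
      = ∑' x : G × G, h x.1 * h (x.1 + D x.2) := by
    rw [← ρ.tsum_eq]
    refine tsum_congr fun x => ?_
    simp [ρ, D, add_assoc]
  have hn : Summable (fun p => ‖h p‖) := by simpa using hs.abs
  have hprod : Summable (fun x : G × G => h x.1 * h x.2) := summable_mul_of_summable_norm hn hn
  have hsm : Summable (fun x : G × G => h x.1 * h (x.1 + D x.2)) := by
    have := hprod.comp_injective (i := fun x : G × G => (x.1, x.1 + D x.2)) (by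
      rintro ⟨a, b⟩ ⟨c, d⟩ hh
      simp only [Prod.mk.injEq] at hh
      obtain ⟨rfl, hh⟩ := hh
      have := hD (add_left_cancel hh)
      simp [this])
    exact this
  rw [e1, hsm.tsum_prod]
  convert key using 1
  refine tsum_congr fun p => ?_
  dsimp only
  rw [tsum_mul_left]
  congr 1
  exact ((AddMonoidHom.ofInjective hD).toEquiv.tsum_eq (fun e : D.range => h (p + e)))

section theta
variable {n : ℕ} (L : Submodule ℤ (EuclideanSpace ℝ (Fin n)))

lemma ent_summable0 [DiscreteTopology L] {κ : ℝ} (hκ : 0 < κ) :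
    Summable (fun y : L => Real.exp (-κ * ‖(y : EuclideanSpace ℝ (Fin n))‖ ^ 2)) := by
  set m : ℕ := Module.finrank ℤ L + 1 with hm
  have h0 := ZLattice.summable_norm_rpow L (-(2 * m : ℝ)) (by
    rw [hm]; push_cast
    have : (0 : ℝ) ≤ Module.finrank ℤ L := by positivity
    linarith)
  refine Summable.of_norm_bounded_eventually
    (h0.mul_left ((m.factorial : ℝ) / κ ^ m)) ?_
  have : ({0}ᶜ : Set L) ∈ Filter.cofinite := by
    simp
  filter_upwards [this] with y hy
  have hy0 : (y : EuclideanSpace ℝ (Fin n)) ≠ 0 := by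
    simpa using hy
  have hpos : 0 < ‖(y : EuclideanSpace ℝ (Fin n))‖ := norm_pos_iff.2 hy0
  have h1 := Real.pow_div_factorial_le_exp (κ * ‖(y : EuclideanSpace ℝ (Fin n))‖ ^ 2)
    (by positivity) m
  rw [Real.norm_eq_abs, abs_of_pos (Real.exp_pos _), neg_mul, Real.exp_neg,
    Real.rpow_neg (by positivity)]
  have h2 : (‖y‖ : ℝ) ^ (2 * m : ℝ) = ‖(y : EuclideanSpace ℝ (Fin n))‖ ^ (2 * m) := by
    rw [← Real.rpow_natCast]; push_cast; rfl
  rw [h2]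
  have h3 : (m.factorial : ℝ) / κ ^ m * (‖(y : EuclideanSpace ℝ (Fin n))‖ ^ (2 * m))⁻¹
      = ((κ * ‖(y : EuclideanSpace ℝ (Fin n))‖ ^ 2) ^ m / m.factorial)⁻¹ := by
    rw [mul_pow, ← pow_mul]
    field_simp
  rw [h3]
  gcongr

lemma ent_shift_bound {κ : ℝ} (hκ : 0 < κ) (y x : EuclideanSpace ℝ (Fin n)) :
    Real.exp (-κ * ‖y + x‖ ^ 2) ≤
      Real.exp (κ * ‖x‖ ^ 2) * Real.exp (-(κ / 2) * ‖y‖ ^ 2) := by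
  rw [← Real.exp_add]
  apply Real.exp_le_exp.2
  have h : ‖y‖ ≤ ‖y + x‖ + ‖x‖ := by
    simpa using norm_sub_le (y + x) x
  have h2 : ‖y‖ ^ 2 ≤ (‖y + x‖ + ‖x‖) ^ 2 := by gcongr
  have h3 : ‖y‖ ^ 2 ≤ 2 * ‖y + x‖ ^ 2 + 2 * ‖x‖ ^ 2 := by
    nlinarith [sq_nonneg (‖y + x‖ - ‖x‖)]
  nlinarith

lemma ent_summable [DiscreteTopology L] {κ : ℝ} (hκ : 0 < κ) (x : EuclideanSpace ℝ (Fin n)) :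
    Summable (fun y : L => Real.exp (-κ * ‖(y : EuclideanSpace ℝ (Fin n)) + x‖ ^ 2)) := by
  have h1 : Summable (fun y : L => Real.exp (κ * ‖x‖ ^ 2) *
      Real.exp (-(κ / 2) * ‖(y : EuclideanSpace ℝ (Fin n))‖ ^ 2)) :=
    (ent_summable0 L (half_pos hκ)).mul_left _
  refine Summable.of_nonneg_of_le (fun y => ?_) (fun y => ?_) h1
  · exact (Real.exp_pos _).le
  · exact ent_shift_bound hκ (y : EuclideanSpace ℝ (Fin n)) x

/-- theta function of a shifted lattice -/
def entTheta (κ : ℝ) (x : EuclideanSpace ℝ (Fin n)) : ℝ :=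
  ∑' y : L, Real.exp (-κ * ‖(y : EuclideanSpace ℝ (Fin n)) + x‖ ^ 2)

lemma entTheta_nonneg (κ : ℝ) (x : EuclideanSpace ℝ (Fin n)) : 0 ≤ entTheta L κ x :=
  tsum_nonneg fun _ => (Real.exp_pos _).le

lemma entTheta_pos [DiscreteTopology L] {κ : ℝ} (hκ : 0 < κ) (x : EuclideanSpace ℝ (Fin n)) :
    0 < entTheta L κ x :=
  (ent_summable L hκ x).tsum_pos (fun _ => (Real.exp_pos _).le) 0 (Real.exp_pos _)

lemma entTheta_neg (κ : ℝ) (x : EuclideanSpace ℝ (Fin n)) :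
    entTheta L κ (-x) = entTheta L κ x := by
  unfold entTheta
  rw [← (Equiv.neg L).tsum_eq]
  refine tsum_congr fun y => ?_
  have : ((Equiv.neg L y : L) : EuclideanSpace ℝ (Fin n)) + -x = -((y : EuclideanSpace ℝ (Fin n)) + x) := by
    simp [add_comm]
  rw [this, norm_neg]

lemma entTheta_add (κ : ℝ) (x : EuclideanSpace ℝ (Fin n)) (z : L) :
    entTheta L κ (z + x) = entTheta L κ x := by
  unfold entTheta
  rw [← (Equiv.addRight z).tsum_eq (fun y : L => Real.exp (-κ * ‖(y : EuclideanSpace ℝ (Fin n)) + x‖ ^ 2))]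
  refine tsum_congr fun y => ?_
  simp [add_assoc]

lemma entTheta_bdd [DiscreteTopology L] [IsZLattice ℝ L] {κ : ℝ} (hκ : 0 < κ) :
    ∃ M, ∀ x, entTheta L κ x ≤ M := by
  let b := (Module.Free.chooseBasis ℤ L).ofZLatticeBasis ℝ L
  have hb : Submodule.span ℤ (Set.range b) = L := (Module.Free.chooseBasis ℤ L).ofZLatticeBasis_span ℝ
  set R := ∑ i, ‖b i‖
  refine ⟨Real.exp (κ * R ^ 2) * ∑' y : L, Real.exp (-(κ / 2) * ‖(y : EuclideanSpace ℝ (Fin n))‖ ^ 2),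
    fun x => ?_⟩
  have hfl : ((ZSpan.floor b x : Submodule.span ℤ (Set.range b)) : EuclideanSpace ℝ (Fin n)) ∈ L := by
    exact hb.le (ZSpan.floor b x).2
  have h1 : entTheta L κ x = entTheta L κ (ZSpan.fract b x) := by
    rw [← entTheta_add L κ (ZSpan.fract b x) ⟨_, hfl⟩]
    simp [ZSpan.fract_apply]
  rw [h1]
  have h2 : ‖ZSpan.fract b x‖ ≤ R := ZSpan.norm_fract_le b x
  generalize ZSpan.fract b x = f at h2
  have h3 : Summable (fun y : L => Real.exp (κ * ‖f‖ ^ 2) *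
      Real.exp (-(κ / 2) * ‖(y : EuclideanSpace ℝ (Fin n))‖ ^ 2)) :=
    (ent_summable0 L (half_pos hκ)).mul_left _
  calc entTheta L κ f
      ≤ ∑' y : L, Real.exp (κ * ‖f‖ ^ 2) *
          Real.exp (-(κ / 2) * ‖(y : EuclideanSpace ℝ (Fin n))‖ ^ 2) :=
        (ent_summable L hκ _).tsum_le_tsum 
          (fun y => ent_shift_bound hκ (y : EuclideanSpace ℝ (Fin n)) f) h3
    _ = Real.exp (κ * ‖f‖ ^ 2) *
          ∑' y : L, Real.exp (-(κ / 2) * ‖(y : EuclideanSpace ℝ (Fin n))‖ ^ 2) := tsum_mul_left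
    _ ≤ _ := by
        gcongr

lemma ent_par {κ : ℝ} (A B : EuclideanSpace ℝ (Fin n)) :
    Real.exp (-(κ / 2) * ‖A - B‖ ^ 2) * Real.exp (-(κ / 2) * ‖A + B‖ ^ 2)
      = Real.exp (-κ * ‖A‖ ^ 2) * Real.exp (-κ * ‖B‖ ^ 2) := by
  rw [← Real.exp_add, ← Real.exp_add]
  congr 1
  have := parallelogram_law_with_norm ℝ A B
  linear_combination (-(κ / 2)) * this

lemma entTheta_ineq [DiscreteTopology L] {κ : ℝ} (hκ : 0 < κ) (x : EuclideanSpace ℝ (Fin n)) :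
    2 * entTheta L κ x ^ 2 ≤ entTheta L κ (x + x) * entTheta L κ 0 + entTheta L κ 0 ^ 2 := by
  let h : L → ℝ := fun p => Real.exp (-(κ / 2) * ‖(p : EuclideanSpace ℝ (Fin n)) + (x + x)‖ ^ 2)
    - Real.exp (-(κ / 2) * ‖(p : EuclideanSpace ℝ (Fin n)) + 0‖ ^ 2)
  have hs : Summable h := (ent_summable L (half_pos hκ) _).sub (ent_summable L (half_pos hκ) _)
  have key := ent_pos' (G := L) (fun a ha => by
    have h1 : (a : EuclideanSpace ℝ (Fin n)) + a = 0 := by exact_mod_cast congrArg Subtype.val ha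
    have h2 : (2 : ℝ) • (a : EuclideanSpace ℝ (Fin n)) = 0 := by rw [two_smul]; exact h1
    have h3 := (smul_eq_zero.1 h2).resolve_left two_ne_zero
    exact Subtype.ext h3) h hs
  have hP : ∀ u v : EuclideanSpace ℝ (Fin n), HasSum (fun z : L × L =>
      Real.exp (-κ * ‖(z.1 : EuclideanSpace ℝ (Fin n)) + u‖ ^ 2) *
      Real.exp (-κ * ‖(z.2 : EuclideanSpace ℝ (Fin n)) + v‖ ^ 2)) (entTheta L κ u * entTheta L κ v) := by
    intro u v
    have hu := ent_summable L hκ u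
    have hv := ent_summable L hκ v
    have := hu.mul_of_nonneg hv (fun _ => (Real.exp_pos _).le) (fun _ => (Real.exp_pos _).le)
    exact hu.hasSum.mul hv.hasSum this
  have hT := (((hP (x + x) 0).sub (hP x (-x))).sub (hP x x)).add (hP 0 0)
  generalize hTd : (fun b : L × L => _) = T at hT
  have heq : (fun z : L × L => h (z.1 - z.2) * h (z.1 + z.2)) = T := by
    funext z
    obtain ⟨y, z⟩ := z
    have e1 := ent_par (κ := κ) ((y : EuclideanSpace ℝ (Fin n)) + (x + x)) (z + 0)
    have e2 := ent_par (κ := κ) ((y : EuclideanSpace ℝ (Fin n)) + x) (z + -x)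
    have e3 := ent_par (κ := κ) ((y : EuclideanSpace ℝ (Fin n)) + x) (z + x)
    have e4 := ent_par (κ := κ) ((y : EuclideanSpace ℝ (Fin n)) + 0) ((z : EuclideanSpace ℝ (Fin n)) + 0)
    have a1 : (y : EuclideanSpace ℝ (Fin n)) + (x + x) - (z + 0) = (y - z) + (x + x) := by abel
    have a2 : (y : EuclideanSpace ℝ (Fin n)) + (x + x) + (z + 0) = (y + z) + (x + x) := by abel
    have a3 : (y : EuclideanSpace ℝ (Fin n)) + x - (z + -x) = (y - z) + (x + x) := by abel
    have a4 : (y : EuclideanSpace ℝ (Fin n)) + x + (z + -x) = (y + z) + 0 := by abel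
    have a5 : (y : EuclideanSpace ℝ (Fin n)) + x - (z + x) = (y - z) + 0 := by abel
    have a6 : (y : EuclideanSpace ℝ (Fin n)) + x + (z + x) = (y + z) + (x + x) := by abel
    have a7 : (y : EuclideanSpace ℝ (Fin n)) + 0 - (z + 0) = (y - z) + 0 := by abel
    have a8 : (y : EuclideanSpace ℝ (Fin n)) + 0 + (z + 0) = (y + z) + 0 := by abel
    rw [a1, a2] at e1
    rw [a3, a4] at e2
    rw [a5, a6] at e3
    rw [a7, a8] at e4
    rw [← hTd]
    dsimp only
    rw [← e1, ← e2, ← e3, ← e4]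
    simp only [h, Submodule.coe_sub, Submodule.coe_add]
    ring
  rw [heq, hT.tsum_eq, entTheta_neg] at key
  nlinarith

lemma entTheta_le [DiscreteTopology L] [IsZLattice ℝ L] {κ : ℝ} (hκ : 0 < κ)
    (x : EuclideanSpace ℝ (Fin n)) : entTheta L κ x ≤ entTheta L κ 0 := by
  obtain ⟨M, hM⟩ := entTheta_bdd L hκ
  have hbdd : BddAbove (Set.range (entTheta L κ)) := ⟨M, by rintro _ ⟨x, rfl⟩; exact hM x⟩
  set m := ⨆ x, entTheta L κ x with hm
  have hle : ∀ x, entTheta L κ x ≤ m := fun x => le_ciSup hbdd x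
  set t := entTheta L κ 0 with ht
  have htpos : 0 < t := entTheta_pos L hκ 0
  have hsq : ∀ x, entTheta L κ x ≤ Real.sqrt ((m * t + t ^ 2) / 2) := by
    intro x
    apply Real.le_sqrt_of_sq_le
    have h1 := entTheta_ineq L hκ x
    have h2 := mul_le_mul_of_nonneg_right (hle (x + x)) htpos.le
    linarith
  have hmt : t ≤ m := hle 0
  have h1 : m ≤ Real.sqrt ((m * t + t ^ 2) / 2) := ciSup_le hsq
  have h2 : m ^ 2 ≤ (m * t + t ^ 2) / 2 := by
    have h3 : m ^ 2 ≤ Real.sqrt ((m * t + t ^ 2) / 2) ^ 2 := by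
      have : 0 ≤ m := htpos.le.trans hmt
      gcongr
    rwa [Real.sq_sqrt (by nlinarith)] at h3
  refine (hle x).trans ?_
  by_contra! hc
  nlinarith
end theta
lemma ent_norm_comb {n : ℕ} (p q : ℝ) (x w : EuclideanSpace ℝ (Fin n)) :
    ‖p • x + q • w‖ ^ 2 = p ^ 2 * ‖x‖ ^ 2 + 2 * p * q * inner ℝ x w + q ^ 2 * ‖w‖ ^ 2 := by
  rw [norm_add_sq_real, norm_smul, norm_smul, inner_smul_left, inner_smul_right, mul_pow, mul_pow,
    Real.norm_eq_abs, Real.norm_eq_abs, sq_abs, sq_abs]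
  simp
  ring

lemma ent_quad {n : ℕ} {a b r : ℝ} (ha : 0 < a) (hb : 0 < b) (hr : r < 1)
    (x w : EuclideanSpace ℝ (Fin n)) :
    -‖x‖ ^ 2 / (2 * a) + -‖w‖ ^ 2 / (2 * b) +
      (r ^ 2 * (a + b) / a) / (2 * (a * b / (a + b))) *
        ‖(1 - a / (a + b)) • x + (a / (a + b)) • w‖ ^ 2
      = -(1 / (2 * a)) * ‖x + r • (w - (r * b / (a * (1 - r))) • x)‖ ^ 2
        + -((1 - r ^ 2 * (a + b) / a) / (2 * b)) * ‖w - (r * b / (a * (1 - r))) • x‖ ^ 2 := by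
  have hr' : 1 - r ≠ 0 := by linarith
  have hab : a + b ≠ 0 := by positivity
  set k := r * b / (a * (1 - r)) with hk
  have e1 : x + r • (w - k • x) = (1 - r * k) • x + r • w := by module
  have e2 : w - k • x = (-k) • x + (1 : ℝ) • w := by module
  rw [e1, e2, ent_norm_comb, ent_norm_comb, ent_norm_comb, hk]
  field_simp
  ring

lemma ent_integrable {n : ℕ} {κ : ℝ} (hκ : 0 < κ) :
    Integrable (fun v : EuclideanSpace ℝ (Fin n) => Real.exp (-κ * ‖v‖ ^ 2)) := by
  by_contra h
  have h1 := GaussianFourier.integral_rexp_neg_mul_sq_norm (V := EuclideanSpace ℝ (Fin n)) hκ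
  rw [integral_undef h] at h1
  have : 0 < (π / κ) ^ ((Module.finrank ℝ (EuclideanSpace ℝ (Fin n)) : ℝ) / 2) := by positivity
  linarith

lemma ent_log {ε : ℝ} (h0 : 0 < ε) (h1 : ε < 1) :
    Real.log (1 + ε) ≤ ε - ε ^ 2 / 2 + ε ^ 3 / 2 := by
  let f : ℝ → ℝ := fun x => x - x ^ 2 / 2 + x ^ 3 / 2 - Real.log (1 + x)
  have hd : ∀ x : ℝ, 0 ≤ x → HasDerivAt f (1 - x + 3 * x ^ 2 / 2 - 1 / (1 + x)) x := by
    intro x hx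
    have hl : HasDerivAt (fun x : ℝ => Real.log (1 + x)) (1 / (1 + x)) x :=
      ((hasDerivAt_id x).const_add 1).log (by simp; linarith)
    have := (((hasDerivAt_id x).sub (((hasDerivAt_id x).pow 2).div_const 2)).add
      (((hasDerivAt_id x).pow 3).div_const 2)).sub hl
    refine this.congr_deriv ?_
    simp only [id]
    norm_num
  have hm : MonotoneOn f (Set.Ici 0) := by
    refine monotoneOn_of_deriv_nonneg (convex_Ici 0)
      (fun x hx => (hd x hx).continuousAt.continuousWithinAt)
      (fun x hx => ?_) (fun x hx => ?_)
    · rw [interior_Ici] at hx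
      exact (hd x (le_of_lt hx)).differentiableAt.differentiableWithinAt
    · rw [interior_Ici] at hx
      have hx' : 0 < x := hx
      rw [(hd x hx'.le).deriv]
      have : 1 - x + 3 * x ^ 2 / 2 - 1 / (1 + x) = (x ^ 2 + 3 * x ^ 3) / (2 * (1 + x)) := by
        field_simp
        ring
      rw [this]
      positivity
  have := hm (Set.mem_Ici.2 le_rfl) (Set.mem_Ici.2 h0.le) h0.le
  simp [f] at this
  linarith

lemma ent_final {n : ℕ} {ε b : ℝ} (h0 : 0 < ε) (h1 : ε < 1) (hb : 0 < b) :
    (2 * π * b) ^ (-(n : ℝ) / 2) * Real.exp (-(ε / 2 * n)) *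
      (π / ((1 - ε / (1 + ε)) / (2 * b))) ^ ((n : ℝ) / 2)
      ≤ Real.exp (-((n : ℝ) / 4) * (ε ^ 2 - ε ^ 3)) := by
  have e1 : π / ((1 - ε / (1 + ε)) / (2 * b)) = (2 * π * b) * (1 + ε) := by
    field_simp
    ring
  have hp : 0 < 2 * π * b := by positivity
  rw [e1, Real.mul_rpow hp.le (by positivity), neg_div, Real.rpow_neg hp.le,
    Real.rpow_def_of_pos (by positivity : 0 < 1 + ε)]
  have hq : (2 * π * b) ^ ((n : ℝ) / 2) ≠ 0 := (Real.rpow_pos_of_pos hp _).ne'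
  have e2 : ∀ X Y Q : ℝ, Q ≠ 0 → Q⁻¹ * X * (Q * Y) = X * Y := by
    intro X Y Q hQ
    field_simp
  rw [e2 _ _ _ hq, ← Real.exp_add]
  apply Real.exp_le_exp.2
  have hl := ent_log h0 h1
  have hn : (0 : ℝ) ≤ (n : ℝ) / 2 := by positivity
  have := mul_le_mul_of_nonneg_right hl hn
  linarith

/-- Each term of the probability sum is bounded by a Chernoff-type Gaussian integral. -/
lemma ent_term {n : ℕ} {σs σw r t ε c : ℝ} (hσs : 0 < σs) (hσw : 0 < σw) (hr : r < 1)
    (ht0 : 0 < t) (ht1 : t < 1) (ht : r ^ 2 * (σs ^ 2 + σw ^ 2) / σs ^ 2 = t)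
    (hc : c = σs ^ 2 * σw ^ 2 / (σs ^ 2 + σw ^ 2)) (hε : t * (1 + ε) = ε) (hε0 : 0 < ε)
    (x : EuclideanSpace ℝ (Fin n)) :
    Real.exp (-‖x‖ ^ 2 / (2 * σs ^ 2)) *
      ∫ w in {w : EuclideanSpace ℝ (Fin n) |
              Real.sqrt ((1 + ε) * n) * Real.sqrt c <
                ‖(1 - σs ^ 2 / (σs ^ 2 + σw ^ 2)) • x + (σs ^ 2 / (σs ^ 2 + σw ^ 2)) • w‖},
            gaussF n σw w
      ≤ (2 * π * σw ^ 2) ^ (-(n : ℝ) / 2) * Real.exp (-(ε / 2 * n)) *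
        ∫ v : EuclideanSpace ℝ (Fin n), Real.exp (-(1 / (2 * σs ^ 2)) * ‖x + r • v‖ ^ 2) *
          Real.exp (-((1 - t) / (2 * σw ^ 2)) * ‖v‖ ^ 2) := by
  have ha : 0 < σs ^ 2 := by positivity
  have hb : 0 < σw ^ 2 := by positivity
  set a := σs ^ 2 with hadef
  set b := σw ^ 2 with hbdef
  have hcpos : 0 < c := by rw [hc]; positivity
  set k := r * b / (a * (1 - r)) with hk
  set Cw := (2 * π * b) ^ (-(n : ℝ) / 2) with hCw
  have hCw0 : 0 < Cw := by positivity
  set P : EuclideanSpace ℝ (Fin n) → ℝ := fun v => Real.exp (-(1 / (2 * a)) * ‖x + r • v‖ ^ 2) *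
          Real.exp (-((1 - t) / (2 * b)) * ‖v‖ ^ 2) with hP
  have hPi : Integrable P := by
    refine (ent_integrable (κ := (1 - t) / (2 * b)) (div_pos (by linarith) (by positivity))).mono'
      (Continuous.aestronglyMeasurable (by fun_prop)) (Eventually.of_forall fun v => ?_)
    rw [Real.norm_eq_abs, abs_of_nonneg (by positivity)]
    apply mul_le_of_le_one_left (Real.exp_pos _).le
    apply Real.exp_le_one_iff.2
    have : 0 ≤ (1 / (2 * a)) * ‖x + r • v‖ ^ 2 := by positivity
    linarith
  set S := {w : EuclideanSpace ℝ (Fin n) |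
              Real.sqrt ((1 + ε) * n) * Real.sqrt c <
                ‖(1 - a / (a + b)) • x + (a / (a + b)) • w‖} with hS
  have hSm : MeasurableSet S := by
    apply IsOpen.measurableSet
    exact isOpen_lt (by fun_prop) (by fun_prop)
  rw [← integral_const_mul, ← integral_const_mul]
  rw [← integral_sub_right_eq_self (μ := volume) (fun v => Cw * Real.exp (-(ε / 2 * n)) * P v) (k • x)]
  rw [← integral_indicator hSm]
  refine integral_mono_of_nonneg (Eventually.of_forall fun w => ?_)
    ((hPi.const_mul _).comp_sub_right (k • x)) (Eventually.of_forall fun w => ?_)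
  · apply Set.indicator_nonneg
    intro w _
    unfold gaussF
    positivity
  · apply Set.indicator_le'
    · intro w hw
      have hq := ent_quad ha hb hr x w
      rw [ht, ← hc] at hq
      rw [← hk] at hq
      simp only [hP, gaussF]
      rw [← hbdef, ← hCw, ← Real.exp_add, ← hq]
      have hw2 : (1 + ε) * n * c < ‖(1 - a / (a + b)) • x + (a / (a + b)) • w‖ ^ 2 := by
        have h1 : Real.sqrt ((1 + ε) * n) * Real.sqrt c <
                ‖(1 - a / (a + b)) • x + (a / (a + b)) • w‖ := hw
        have h2 : (Real.sqrt ((1 + ε) * n) * Real.sqrt c) ^ 2 = (1 + ε) * n * c := by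
          rw [mul_pow, Real.sq_sqrt (by positivity), Real.sq_sqrt hcpos.le]
        rw [← h2]
        gcongr
      have h3 : ε / 2 * n ≤ t / (2 * c) * ‖(1 - a / (a + b)) • x + (a / (a + b)) • w‖ ^ 2 := by
        calc ε / 2 * n = t / (2 * c) * ((1 + ε) * n * c) := by
              field_simp
              linear_combination (-(n : ℝ)) * hε
          _ ≤ _ := by gcongr
      calc Real.exp (-‖x‖ ^ 2 / (2 * a)) * (Cw * Real.exp (-‖w‖ ^ 2 / (2 * b)))
          = Cw * Real.exp (-‖x‖ ^ 2 / (2 * a) + -‖w‖ ^ 2 / (2 * b)) := by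
            rw [Real.exp_add]; ring
        _ ≤ Cw * Real.exp (-(ε / 2 * n) + (-‖x‖ ^ 2 / (2 * a) + -‖w‖ ^ 2 / (2 * b) +
              t / (2 * c) * ‖(1 - a / (a + b)) • x + (a / (a + b)) • w‖ ^ 2)) := by
            refine mul_le_mul_of_nonneg_left (Real.exp_le_exp.2 ?_) hCw0.le
            linarith
        _ = _ := by rw [Real.exp_add (-(ε / 2 * n))]; ring
    · intro w _
      positivity

/-- tail bound for the effective noise `W_eff = (1−α)X + αW`,
`X ~ D_{Λ',σ_s}`, `W ~ N(0,σ_w²Iₙ)`: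
`Pr[‖W_eff‖ > √((1+ε)n)·σ_eff] ≤ exp(−(n/4)(ε²−ε³))`. -/
theorem effective_noise_tail (n : ℕ) (L' : Submodule ℤ (EuclideanSpace ℝ (Fin n)))
    [DiscreteTopology L'] [IsZLattice ℝ L']
    (σs σw : ℝ) (hσs : 0 < σs) (hσw : 0 < σw)
    (α σeff : ℝ)
    (hα : α = σs ^ 2 / (σs ^ 2 + σw ^ 2))
    (hσeff : σeff = Real.sqrt (σs ^ 2 * σw ^ 2 / (σs ^ 2 + σw ^ 2)))
    (ε : ℝ) (hε0 : 0 < ε) (hε1 : ε < 1) :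
    (∑' x : (L' : Set (EuclideanSpace ℝ (Fin n))),
        (gaussF n σs x / gaussMass n σs (L' : Set (EuclideanSpace ℝ (Fin n)))) *
          ∫ w in {w : EuclideanSpace ℝ (Fin n) |
              Real.sqrt ((1 + ε) * n) * σeff < ‖(1 - α) • (x : EuclideanSpace ℝ (Fin n)) + α • w‖},
            gaussF n σw w)
      ≤ Real.exp (-((n : ℝ) / 4) * (ε ^ 2 - ε ^ 3)) := by

  subst hα hσeff
  set t := ε / (1 + ε) with htd
  have ht0 : 0 < t := by positivity
  have ht1 : t < 1 := by rw [htd, div_lt_one (by positivity)]; linarith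
  have hte : t * (1 + ε) = ε := by rw [htd]; field_simp
  set r := Real.sqrt (t * (σs ^ 2 / (σs ^ 2 + σw ^ 2))) with hrd
  have hr2 : r ^ 2 = t * (σs ^ 2 / (σs ^ 2 + σw ^ 2)) := Real.sq_sqrt (by positivity)
  have hα1 : σs ^ 2 / (σs ^ 2 + σw ^ 2) < 1 := by
    rw [div_lt_one (by positivity)]
    have : 0 < σw ^ 2 := by positivity
    linarith
  have hα0 : 0 < σs ^ 2 / (σs ^ 2 + σw ^ 2) := by positivity
  have hr : r < 1 := by
    rw [hrd, Real.sqrt_lt' one_pos]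
    nlinarith
  have ht : r ^ 2 * (σs ^ 2 + σw ^ 2) / σs ^ 2 = t := by
    rw [hr2]; field_simp
  have hκ : 0 < 1 / (2 * σs ^ 2) := by positivity
  have hμ : 0 < (1 - t) / (2 * σw ^ 2) := div_pos (by linarith) (by positivity)
  set θ := entTheta L' (1 / (2 * σs ^ 2)) 0 with hθ
  have hθ0 : 0 < θ := entTheta_pos L' hκ 0
  set Cs := (2 * π * σs ^ 2) ^ (-(n : ℝ) / 2) with hCs
  have hCs0 : 0 < Cs := by positivity
  have hM : gaussMass n σs (L' : Set (EuclideanSpace ℝ (Fin n))) = Cs * θ := by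
    unfold gaussMass gaussF
    rw [tsum_mul_left, hθ, entTheta]
    congr 1
    refine tsum_congr fun y => ?_
    congr 1
    rw [add_zero]
    ring
  rw [hM]
  set B := (2 * π * σw ^ 2) ^ (-(n : ℝ) / 2) * Real.exp (-(ε / 2 * n)) with hB
  have hB0 : 0 < B := by positivity
  let P : EuclideanSpace ℝ (Fin n) → EuclideanSpace ℝ (Fin n) → ℝ := fun x v =>
    Real.exp (-(1 / (2 * σs ^ 2)) * ‖x + r • v‖ ^ 2) *
          Real.exp (-((1 - t) / (2 * σw ^ 2)) * ‖v‖ ^ 2)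
  have hPi : ∀ x, Integrable (P x) := by
    intro x
    refine (ent_integrable hμ).mono'
      (Continuous.aestronglyMeasurable (by fun_prop)) (Eventually.of_forall fun v => ?_)
    rw [Real.norm_eq_abs, abs_of_nonneg (by positivity)]
    apply mul_le_of_le_one_left (Real.exp_pos _).le
    apply Real.exp_le_one_iff.2
    have : 0 ≤ (1 / (2 * σs ^ 2)) * ‖x + r • v‖ ^ 2 := by positivity
    linarith
  apply Real.tsum_le_of_sum_le
  · intro x
    apply mul_nonneg
    · unfold gaussF
      positivity
    · refine integral_nonneg fun w => ?_
      unfold gaussF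
      positivity
  intro u
  calc _ ≤ ∑ x ∈ u, B / θ * ∫ v, P x v := by
        refine Finset.sum_le_sum fun x _ => ?_
        have h := ent_term (n := n) hσs hσw hr ht0 ht1 ht rfl hte hε0 (x : EuclideanSpace ℝ (Fin n))
        have h2 := mul_le_mul_of_nonneg_left h (inv_nonneg.2 hθ0.le)
        calc _ = θ⁻¹ * _ := by
              rw [gaussF, ← hCs, mul_div_mul_left _ _ hCs0.ne', div_eq_inv_mul, mul_assoc]
          _ ≤ _ := h2
          _ = _ := by
              rw [← hB, div_eq_inv_mul B θ, mul_assoc θ⁻¹ B]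
    _ = B / θ * ∫ v, ∑ x ∈ u, P x v := by
        rw [← Finset.mul_sum, integral_finsetSum u (fun x _ => hPi (x : EuclideanSpace ℝ (Fin n)))]
    _ ≤ B / θ * ∫ v, θ * Real.exp (-((1 - t) / (2 * σw ^ 2)) * ‖v‖ ^ 2) := by
        have hBθ : 0 ≤ B / θ := by positivity
        refine mul_le_mul_of_nonneg_left ?_ hBθ
        refine integral_mono (integrable_finsetSum u fun x _ => hPi (x : EuclideanSpace ℝ (Fin n)))
          ((ent_integrable hμ).const_mul _) fun v => ?_
        simp only [P]
        rw [← Finset.sum_mul]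
        refine mul_le_mul_of_nonneg_right ?_ (Real.exp_pos _).le
        refine le_trans ?_ (entTheta_le L' hκ (r • v))
        exact (ent_summable L' hκ (r • v)).sum_le_tsum u (fun _ _ => (Real.exp_pos _).le)
    _ = B * (π / ((1 - t) / (2 * σw ^ 2))) ^ ((n : ℝ) / 2) := by
        rw [integral_const_mul, GaussianFourier.integral_rexp_neg_mul_sq_norm hμ,
          finrank_euclideanSpace_fin]
        field_simp
    _ ≤ _ := ent_final hε0 hε1 (by positivity)
end
end
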